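/- Let k ≥ 2 and 0 < n < 2k−2 be integers. For every τ ∈ ℍ∖E₁ one has ξ_{2−2k}H_{1−k,n}(τ) = −R_n(τ) and 𝒟^{2k−1}H_{1−k,n}(τ) = (−1)^{n+1}·((2k−2)!/(4π)^{2k−1})·R_n(τ). -/

import Mathlib

open Complex MeasureTheory
open scoped Real

noncomputable section

namespace LHMF

abbrev SL2Z := Matrix.SpecialLinearGroup (Fin 2) ℤ

/-- Möbius action of `SL₂(ℤ)` on `ℂ`. -/
def moeb (M : SL2Z) (τ : ℂ) : ℂ :=
  ((M.1 0 0 : ℂ) * τ + (M.1 0 1 : ℂ)) / ((M.1 1 0 : ℂ) * τ + (M.1 1 1 : ℂ))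

/-- Automorphy factor `j(M,τ) = cτ + d`. -/
def jfac (M : SL2Z) (τ : ℂ) : ℂ := (M.1 1 0 : ℂ) * τ + (M.1 1 1 : ℂ)

/-- `E₁`: union of all `SL₂(ℤ)`-translates of the positive imaginary axis. -/
def E1 : Set ℂ := ⋃ M : SL2Z, (fun y : ℝ => moeb M ((y : ℂ) * Complex.I)) '' Set.Ioi 0

/-- Wirtinger derivative `∂f/∂τ`. -/
def dtau (f : ℂ → ℂ) (τ : ℂ) : ℂ :=
  (fderiv ℝ f τ 1 - Complex.I * fderiv ℝ f τ Complex.I) / 2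

/-- Wirtinger derivative `∂f/∂τ̄`. -/
def dtaubar (f : ℂ → ℂ) (τ : ℂ) : ℂ :=
  (fderiv ℝ f τ 1 + Complex.I * fderiv ℝ f τ Complex.I) / 2

/-- The operator `ξ_κ f = 2i v^κ conj(∂f/∂τ̄)`. -/
def xiOp (κ : ℤ) (f : ℂ → ℂ) (τ : ℂ) : ℂ :=
  2 * Complex.I * ((τ.im : ℂ) ^ κ) * starRingEnd ℂ (dtaubar f τ)

/-- The operator `𝒟 = (1/(2πi)) ∂/∂τ`. -/
def Dop (f : ℂ → ℂ) : ℂ → ℂ := fun τ => (2 * (π : ℂ) * Complex.I)⁻¹ * dtau f τ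

/-- Maass raising operator of weight `κ`. -/
def raiseOp (κ : ℤ) (f : ℂ → ℂ) (τ : ℂ) : ℂ :=
  2 * Complex.I * dtau f τ + (κ : ℂ) * (τ.im : ℂ)⁻¹ * f τ

/-- Iterated raising operator `R_κ^m = R_{κ+2m-2} ∘ ⋯ ∘ R_{κ+2} ∘ R_κ`. -/
def raiseIter (κ : ℤ) : ℕ → (ℂ → ℂ) → (ℂ → ℂ)
  | 0 => fun f => f
  | m + 1 => fun f => raiseOp (κ + 2 * m) (raiseIter κ m f)

/-- Petersson's Poincaré series `H_{k,k-1}(z,τ)`. -/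
def Hpet (k : ℕ) (z τ : ℂ) : ℂ :=
  ∑' M : SL2Z, jfac M τ ^ (2 * k - 2) * ((moeb M τ).im : ℂ) ^ (2 * k - 1) *
    (z - moeb M τ)⁻¹ * (z - starRingEnd ℂ (moeb M τ)) ^ (1 - 2 * (k : ℤ))

/-- The locally harmonic Maass form `H_{1-k,n}`. -/
def Hlhmf (k n : ℕ) (τ : ℂ) : ℂ :=
  (2 * Complex.I) ^ (2 * k - 2) / (2 * (π : ℂ)) *
    ∫ y in Set.Ioi (0 : ℝ), Hpet k ((y : ℂ) * Complex.I) τ * (y : ℂ) ^ n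

/-- The cusp form `R_n` of weight `2k`. -/
def Rnform (k n : ℕ) (τ : ℂ) : ℂ :=
  (2 : ℂ) ^ (2 * k - 3) / (Complex.I ^ (2 * k - 1 - n) * (Nat.choose (2 * k - 2) n : ℂ) * (π : ℂ)) *
    ∑' M : SL2Z, jfac M τ ^ (-2 * (k : ℤ)) * moeb M τ ^ (-(n : ℤ) - 1)

/-- Holomorphic Eichler integral of `f` (weight `2k`), along a vertical path. -/
def eichlerHol (k : ℕ) (f : ℂ → ℂ) (τ : ℂ) : ℂ :=
  (-2 * (π : ℂ) * Complex.I) ^ (2 * k - 1) / (Nat.factorial (2 * k - 2) : ℂ) *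
    ∫ t in Set.Ioi (0 : ℝ), f (τ + (t : ℂ) * Complex.I) * ((t : ℂ) * Complex.I) ^ (2 * k - 2) *
      Complex.I

/-- Non-holomorphic Eichler integral `f^*` of `f` (weight `2k`), along a vertical path. -/
def eichlerStar (k : ℕ) (f : ℂ → ℂ) (τ : ℂ) : ℂ :=
  (-2 * Complex.I) ^ (1 - 2 * (k : ℤ)) *
    ∫ t in Set.Ioi (0 : ℝ),
      starRingEnd ℂ (f (-(starRingEnd ℂ (-(starRingEnd ℂ τ) + (t : ℂ) * Complex.I)))) *
        (-(starRingEnd ℂ τ) + (t : ℂ) * Complex.I + τ) ^ (2 * k - 2) * Complex.I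

/-- Bernoulli polynomial evaluated at a complex number. -/
def bernC (m : ℕ) (τ : ℂ) : ℂ := Polynomial.aeval τ (Polynomial.bernoulli m)

/-- Periodized Bernoulli polynomial `𝔹_m(τ) = B_m(τ - ⌊Re τ⌋)`. -/
def bernPer (m : ℕ) (τ : ℂ) : ℂ := bernC m (τ - (⌊τ.re⌋ : ℂ))

/-- The period `r_n(E_{2k})` of the Eisenstein series, for `0 < n < 2k-2`. -/
def rnE (k n : ℕ) : ℚ :=
  if n % 2 = 0 then 0
  else (-1) ^ ((n - 1) / 2) * (2 * (k : ℚ)) * bernoulli (n + 1) * bernoulli (2 * k - 1 - n) /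
    (bernoulli (2 * k) * ((n : ℚ) + 1) * ((2 * k - 1 - n : ℕ) : ℚ))

/-- The local polynomial `P_{1-k,n}`. -/
def Ppoly (k n : ℕ) (τ : ℂ) : ℂ :=
  (rnE k n : ℂ)
  + (-Complex.I) ^ (n + 1) / ((n : ℂ) + 1) * bernPer (n + 1) τ
  + Complex.I ^ (n + 1) / ((2 * k - 1 - n : ℕ) : ℂ) * bernPer (2 * k - 1 - n) τ
  + Complex.I ^ (1 - (n : ℤ)) / 2 *
      ∑' M : {M : SL2Z // 0 < M.1 0 0 * M.1 1 0 ∧ (moeb M τ).re < 0},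
        jfac M.1 τ ^ (2 * k - 2) *
          (moeb M.1 τ ^ n - (-1 : ℂ) ^ n * moeb M.1 τ ^ (2 * k - 2 - n))

/-- The binary quadratic form `[a,b,c]` evaluated at complex arguments. -/
def qfC (a b c : ℤ) (x y : ℂ) : ℂ := (a : ℂ) * x ^ 2 + (b : ℂ) * x * y + (c : ℂ) * y ^ 2

/-- CM point of the positive definite form `[a,b,c]`. -/
def cmPoint (a b c : ℤ) : ℂ :=
  (-(b : ℂ) + Complex.I * ((Real.sqrt (((b ^ 2 - 4 * a * c).natAbs : ℝ))) : ℂ)) / (2 * (a : ℂ))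

/-- The form `[a,b,c] ∘ M`. -/
def qfComp (a b c : ℤ) (M : SL2Z) : ℤ × ℤ × ℤ :=
  (a * (M.1 0 0) ^ 2 + b * (M.1 0 0) * (M.1 1 0) + c * (M.1 1 0) ^ 2,
   2 * a * (M.1 0 0) * (M.1 0 1) + b * ((M.1 0 0) * (M.1 1 1) + (M.1 0 1) * (M.1 1 0)) +
     2 * c * (M.1 1 0) * (M.1 1 1),
   a * (M.1 0 1) ^ 2 + b * (M.1 0 1) * (M.1 1 1) + c * (M.1 1 1) ^ 2)

/-- `w_P`: order of the stabilizer of `P = [a,b,c]` in `PSL₂(ℤ)` (half the order of the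
stabilizer in `SL₂(ℤ)`, which contains `±1`). -/
def wP (a b c : ℤ) : ℕ := Nat.card {M : SL2Z // qfComp a b c M = (a, b, c)} / 2

/-- The meromorphic modular form `f_{k,P}` for `P = [a,b,c]`. -/
def fkP (k : ℕ) (a b c : ℤ) (z : ℂ) : ℂ :=
  (((((b ^ 2 - 4 * a * c).natAbs : ℝ)) ^ ((k : ℝ) - 1 / 2) : ℝ) : ℂ) /
      (2 * (π : ℂ) * (wP a b c : ℂ)) *
    ∑' M : SL2Z, (qfC a b c ((M.1 0 0 : ℂ) * z + (M.1 0 1 : ℂ))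
      ((M.1 1 0 : ℂ) * z + (M.1 1 1 : ℂ))) ^ (-(k : ℤ))

/-- The `n`-th period `r_n(f) = ∫₀^∞ f(iy) y^n dy`. -/
def periodN (n : ℕ) (f : ℂ → ℂ) : ℂ :=
  ∫ y in Set.Ioi (0 : ℝ), f ((y : ℂ) * Complex.I) * (y : ℂ) ^ n

/-- Epstein zeta function of `[a,b,c]` at an integer `k`. -/
def epstein (a b c : ℤ) (k : ℕ) : ℝ :=
  ∑' p : {p : ℤ × ℤ // p ≠ (0, 0)},
    ((a * p.1.1 ^ 2 + b * p.1.1 * p.1.2 + c * p.1.2 ^ 2 : ℤ) : ℝ) ^ (-(k : ℤ))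

/-- `sgn(M)` for `M = (a,b;c,d)`: `sgn(ac)` if `ac ≠ 0`, else `sgn(bd)`. -/
def sgnM (M : SL2Z) : ℤ :=
  if M.1 0 0 * M.1 1 0 ≠ 0 then Int.sign (M.1 0 0 * M.1 1 0) else Int.sign (M.1 0 1 * M.1 1 1)

/-- Upper incomplete Gamma function `Γ(s,x)` for a natural number `s`. -/
def GammaUpper (s : ℕ) (x : ℝ) : ℝ := ∫ t in Set.Ioi x, Real.exp (-t) * t ^ (s - 1)

/-- A cusp form of weight `2k` for `SL₂(ℤ)`, as a function on `ℂ` (holomorphic on `ℍ`,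
modular of weight `2k`, vanishing at the cusp `i∞`). -/
def IsCuspForm2k (k : ℕ) (f : ℂ → ℂ) : Prop :=
  (∀ τ : ℂ, 0 < τ.im → DifferentiableAt ℂ f τ) ∧
  (∀ (M : SL2Z) (τ : ℂ), 0 < τ.im → f (moeb M τ) = jfac M τ ^ (2 * k) * f τ) ∧
  Filter.Tendsto f (Filter.comap Complex.im Filter.atTop) (nhds 0)

/-!
Put `d = 2k - 2`. For fixed `M` and `y` the function `ℓ(τ) = j(M, τ) (iy - Mτ)` is affine in `τ`,
and interchanging sum and integral turns `H_{1-k,n}(τ)` into `h(τ, τ̄)` with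
`h(τ, σ) = (τ - σ)^(d+1) ∫ w / (ℓ(τ) ℓ(σ)^(d+1))`, the integral running over
`SL₂(ℤ) × (0, ∞)` with weight `w = yⁿ / (4πi)`. Away from `E₁` the forms `ℓ` are bounded below by
a multiple of the size of their coefficients, so that everything converges absolutely.

Affineness gives `(τ - σ) ℓ(τ₀) - (τ - τ₀) ℓ(σ) = (τ₀ - σ) ℓ(τ)`, and the geometric sum for
the `(d+1)`-st powers of the two terms on the left rewrites `h(τ, σ)` as
`(τ - τ₀)^(d+1) ∫ w / (ℓ(τ₀)^(d+1) ℓ(τ))` plus a polynomial in `τ` of degree at most `d`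
whose coefficients are analytic in `σ`. Hence `(∂/∂τ)^(d+1)` picks out `(d+1)!` times the moment
`∫ w / ℓ^(d+2)` at `τ₀`, while `∂/∂τ̄` produces the same moment at `τ̄₀`. A Beta integral over `y`
followed by the substitution `M ↦ SM` evaluates the moment as a multiple of `R_n`.
-/

section Wirtinger

variable {f g : ℂ → ℂ} {a a' b b' τ : ℂ}

/-- `f` is real differentiable at `τ` with Wirtinger derivatives `∂f/∂τ = a` and `∂f/∂τ̄ = b`. -/
def HasWirtingerDerivAt (f : ℂ → ℂ) (a b τ : ℂ) : Prop :=
  HasFDerivAt f (a • ContinuousLinearMap.id ℝ ℂ + b • (conjCLE : ℂ →L[ℝ] ℂ)) τ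

namespace HasWirtingerDerivAt

lemma dtau_eq (h : HasWirtingerDerivAt f a b τ) : dtau f τ = a := by
  simp only [dtau, HasFDerivAt.fderiv h, add_apply,
    smul_apply, ContinuousLinearMap.id_apply, ContinuousLinearEquiv.coe_coe,
    conjCLE_apply, map_one, conj_I, smul_eq_mul]
  linear_combination ((b - a) / 2) * I_mul_I

lemma dtaubar_eq (h : HasWirtingerDerivAt f a b τ) : dtaubar f τ = b := by
  simp only [dtaubar, HasFDerivAt.fderiv h, add_apply,
    smul_apply, ContinuousLinearMap.id_apply, ContinuousLinearEquiv.coe_coe,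
    conjCLE_apply, map_one, conj_I, smul_eq_mul]
  linear_combination ((a - b) / 2) * I_mul_I

lemma of_hasDerivAt (h : HasDerivAt f a τ) : HasWirtingerDerivAt f a 0 τ :=
  h.complexToReal_fderiv.congr_fderiv (by ext; simp)

lemma comp_conj (h : HasDerivAt g b (starRingEnd ℂ τ)) :
    HasWirtingerDerivAt (fun z => g (starRingEnd ℂ z)) 0 b τ :=
  (h.complexToReal_fderiv.comp τ conjCLE.hasFDerivAt).congr_fderiv (by ext; simp)

lemma add (hf : HasWirtingerDerivAt f a b τ) (hg : HasWirtingerDerivAt g a' b' τ) :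
    HasWirtingerDerivAt (fun z => f z + g z) (a + a') (b + b') τ := by
  refine (HasFDerivAt.fun_add hf hg).congr_fderiv ?_
  module

lemma mul (hf : HasWirtingerDerivAt f a b τ) (hg : HasWirtingerDerivAt g a' b' τ) :
    HasWirtingerDerivAt (fun z => f z * g z) (a * g τ + f τ * a') (b * g τ + f τ * b') τ := by
  refine (HasFDerivAt.fun_mul hf hg).congr_fderiv ?_
  module

lemma sum {ι : Type*} {F : ι → ℂ → ℂ} {A B : ι → ℂ} (s : Finset ι)
    (h : ∀ i ∈ s, HasWirtingerDerivAt (F i) (A i) (B i) τ) :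
    HasWirtingerDerivAt (fun z => ∑ i ∈ s, F i z) (∑ i ∈ s, A i) (∑ i ∈ s, B i) τ := by
  refine (HasFDerivAt.fun_sum h).congr_fderiv ?_
  ext; simp [Finset.sum_add_distrib, Finset.sum_mul]

lemma congr_of_eventuallyEq (h : HasWirtingerDerivAt f a b τ) (hgf : g =ᶠ[nhds τ] f) :
    HasWirtingerDerivAt g a b τ :=
  HasFDerivAt.congr_of_eventuallyEq h hgf

end HasWirtingerDerivAt

end Wirtinger

section Expansion

open Filter Finset

variable {f K : ℂ → ℂ} {F G : ℂ → ℂ → ℂ} {τ₀ : ℂ} {m : ℕ}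

/-- Around `(τ₀, conj τ₀)`, the function `F τ σ` is a polynomial of degree `< m` in `τ` whose
coefficients are analytic in `σ`. Such functions restricted to `σ = conj τ` are the
almost-holomorphic polynomials killed by the `m`-fold derivative `∂/∂τ`. -/
def IsPolynomialBelow (m : ℕ) (τ₀ : ℂ) (F : ℂ → ℂ → ℂ) : Prop :=
  ∃ g : ℕ → ℂ → ℂ, (∀ j, AnalyticAt ℂ (g j) (starRingEnd ℂ τ₀)) ∧
    ∀ τ σ, F τ σ = ∑ j ∈ range m, (τ - τ₀) ^ j * g j σ

namespace IsPolynomialBelow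

lemma add (hF : IsPolynomialBelow m τ₀ F) (hG : IsPolynomialBelow m τ₀ G) :
    IsPolynomialBelow m τ₀ fun τ σ => F τ σ + G τ σ := by
  obtain ⟨f, hf, hFf⟩ := hF
  obtain ⟨g, hg, hGg⟩ := hG
  refine ⟨fun j σ => f j σ + g j σ, fun j => (hf j).add (hg j), fun τ σ => ?_⟩
  simp only [hFf, hGg, mul_add, sum_add_distrib]

lemma sum {ι : Type*} {F : ι → ℂ → ℂ → ℂ} (s : Finset ι)
    (hF : ∀ i ∈ s, IsPolynomialBelow m τ₀ (F i)) :
    IsPolynomialBelow m τ₀ fun τ σ => ∑ i ∈ s, F i τ σ := by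
  choose! g hg hFg using hF
  refine ⟨fun j σ => ∑ i ∈ s, g i j σ,
    fun j => s.analyticAt_fun_sum fun i hi => hg i hi j, fun τ σ => ?_⟩
  simp only [mul_sum]
  rw [sum_comm]
  exact sum_congr rfl fun i hi => hFg i hi τ σ

lemma pow_mul_pow_mul {h : ℂ → ℂ} (hh : AnalyticAt ℂ h (starRingEnd ℂ τ₀)) {e i : ℕ}
    (hei : e + i < m) :
    IsPolynomialBelow m τ₀ fun τ σ => (τ - τ₀) ^ e * (τ - σ) ^ i * h σ := by
  induction i generalizing e h with
  | zero =>
    refine ⟨fun j => if j = e then h else 0, fun j => ?_, fun τ σ => ?_⟩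
    · dsimp only
      split_ifs
      exacts [hh, analyticAt_const]
    · have he : e ∈ range m := mem_range.mpr hei
      simp [ite_apply, he]
  | succ i ih =>
    have hh' : AnalyticAt ℂ (fun σ => (τ₀ - σ) * h σ) (starRingEnd ℂ τ₀) := by fun_prop
    convert (ih hh (e := e + 1) (by omega)).add (ih hh' (e := e) (by omega)) using 3
    ring

end IsPolynomialBelow

lemma hasWirtingerDerivAt_expansion {g g' : ℕ → ℂ → ℂ} {K' τ : ℂ} (hK : HasDerivAt K K' τ)
    (hg : ∀ j ∈ range m, HasDerivAt (g j) (g' j (starRingEnd ℂ τ)) (starRingEnd ℂ τ)) :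
    HasWirtingerDerivAt
      (fun z => (z - τ₀) ^ m * K z + ∑ j ∈ range m, (z - τ₀) ^ j * g j (starRingEnd ℂ z))
      (m * (τ - τ₀) ^ (m - 1) * K τ + (τ - τ₀) ^ m * K' +
        ∑ j ∈ range m, j * (τ - τ₀) ^ (j - 1) * g j (starRingEnd ℂ τ))
      (∑ j ∈ range m, (τ - τ₀) ^ j * g' j (starRingEnd ℂ τ)) τ := by
  have hpow (j : ℕ) : HasWirtingerDerivAt (fun z => (z - τ₀) ^ j) (j * (τ - τ₀) ^ (j - 1)) 0 τ :=
    .of_hasDerivAt (by simpa using ((hasDerivAt_id τ).sub_const τ₀).fun_pow j)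
  simpa using ((hpow m).mul (.of_hasDerivAt hK)).add
    (.sum (range m) fun j hj => (hpow j).mul (.comp_conj (hg j hj)))

lemma iterate_Dop_of_expansion {g : ℕ → ℂ → ℂ} (hK : AnalyticAt ℂ K τ₀)
    (hg : ∀ j, AnalyticAt ℂ (g j) (starRingEnd ℂ τ₀))
    (hf : f =ᶠ[nhds τ₀] fun τ =>
      (τ - τ₀) ^ m * K τ + ∑ j ∈ range m, (τ - τ₀) ^ j * g j (starRingEnd ℂ τ)) :
    Dop^[m] f τ₀ = (2 * π * I)⁻¹ ^ m * m.factorial * K τ₀ := by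
  induction m generalizing f K g with
  | zero => simpa using hf.eq_of_nhds
  | succ m ih =>
    set c : ℂ := (2 * π * I)⁻¹ with hc
    have hgan : ∀ᶠ τ in nhds τ₀, ∀ j ∈ range (m + 1), AnalyticAt ℂ (g j) (starRingEnd ℂ τ) :=
      (Finset.eventually_all _).mpr fun j _ =>
        (continuous_conj.tendsto τ₀).eventually (hg j).eventually_analyticAt
    have hDop : Dop f =ᶠ[nhds τ₀] fun τ =>
        (τ - τ₀) ^ m * (c * ((m + 1) * K τ + (τ - τ₀) * deriv K τ)) +
          ∑ j ∈ range m, (τ - τ₀) ^ j * (c * (j + 1) * g (j + 1) (starRingEnd ℂ τ)) := by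
      filter_upwards [hf.eventuallyEq_nhds, hK.eventually_analyticAt, hgan] with τ hfτ hKτ hgτ
      have hW := (hasWirtingerDerivAt_expansion (g' := fun j => deriv (g j))
        hKτ.differentiableAt.hasDerivAt
        fun j hj => (hgτ j hj).differentiableAt.hasDerivAt).congr_of_eventuallyEq hfτ
      rw [Dop, hW.dtau_eq, ← hc, sum_range_succ']
      push_cast
      simp only [zero_mul, add_zero]
      rw [mul_add, mul_sum]
      congr 1
      · ring
      · exact sum_congr rfl fun j _ => by ring
    have hK' : AnalyticAt ℂ (fun τ => c * ((m + 1) * K τ + (τ - τ₀) * deriv K τ)) τ₀ := by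
      have := hK.deriv
      fun_prop
    rw [Function.iterate_succ_apply, ih hK' (fun j => analyticAt_const.mul (hg (j + 1))) hDop,
      Nat.factorial_succ]
    push_cast
    ring

lemma iterate_Dop_of_isPolynomialBelow (hK : AnalyticAt ℂ K τ₀) (hF : IsPolynomialBelow m τ₀ F)
    (hf : f =ᶠ[nhds τ₀] fun τ => (τ - τ₀) ^ m * K τ + F τ (starRingEnd ℂ τ)) :
    Dop^[m] f τ₀ = (2 * π * I)⁻¹ ^ m * m.factorial * K τ₀ := by
  obtain ⟨g, hg, hFg⟩ := hF
  simp only [hFg] at hf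
  exact iterate_Dop_of_expansion hK hg hf

lemma dtaubar_of_isPolynomialBelow (hK : AnalyticAt ℂ K τ₀) (hF : IsPolynomialBelow m τ₀ F)
    (hf : f =ᶠ[nhds τ₀] fun τ => (τ - τ₀) ^ m * K τ + F τ (starRingEnd ℂ τ)) :
    dtaubar f τ₀ = deriv (F τ₀) (starRingEnd ℂ τ₀) := by
  obtain ⟨g, hg, hFg⟩ := hF
  have hg' (j : ℕ) : HasDerivAt (g j) (deriv (g j) (starRingEnd ℂ τ₀)) (starRingEnd ℂ τ₀) :=
    (hg j).differentiableAt.hasDerivAt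
  simp only [hFg] at hf
  rw [((hasWirtingerDerivAt_expansion (g' := fun j => deriv (g j)) hK.differentiableAt.hasDerivAt
    fun j _ => hg' j).congr_of_eventuallyEq hf).dtaubar_eq, funext (hFg τ₀)]
  exact (HasDerivAt.fun_sum fun j _ => (hg' j).const_mul ((τ₀ - τ₀) ^ j)).deriv.symm

end Expansion

section AffineFamilies

variable {X : Type*} [MeasurableSpace X] {μ : Measure X} {N d r i j : ℕ} {p q τ : ℂ}

/-- A weighted measurable family of affine functions `p ↦ slope x * p + offset x`, whose slopes are
bounded by `size` and for which `weight / size ^ N` is integrable. The weight can then be integrated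
against products of `N` reciprocals of the affine functions, as long as these are bounded below by
a multiple of `size`. -/
structure AffineFamily {X : Type*} [MeasurableSpace X] (μ : Measure X) (N : ℕ) where
  slope : X → ℂ
  offset : X → ℂ
  weight : X → ℂ
  size : X → ℝ
  measurable_slope : Measurable slope
  measurable_offset : Measurable offset
  measurable_weight : Measurable weight
  size_pos : ∀ x, 0 < size x
  norm_slope_le : ∀ x, ‖slope x‖ ≤ size x
  integrable_weight_div : Integrable (fun x => weight x / size x ^ N) μ

namespace AffineFamily

/-- The value at `p` of the member with index `x`. -/
def eval (A : AffineFamily μ N) (x : X) (p : ℂ) : ℂ := A.slope x * p + A.offset x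

/-- Points at which almost all members are bounded below by a fixed multiple of their size. -/
def regularSet (A : AffineFamily μ N) : Set ℂ :=
  {p | ∃ c > 0, ∀ᵐ x ∂μ, c * A.size x ≤ ‖A.eval x p‖}

/-- The integrand of `pairing`. -/
def kernel (A : AffineFamily μ N) (r i j : ℕ) (p q : ℂ) (x : X) : ℂ :=
  A.slope x ^ r * A.weight x * (A.eval x p ^ i * A.eval x q ^ j)⁻¹

/-- The integral of `slope ^ r * weight / (eval p ^ i * eval q ^ j)`. It converges for regular `p`
and `q` if `i + j = N + r`; differentiating in `q` raises `r` and `j` by one. -/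
def pairing (A : AffineFamily μ N) (r i j : ℕ) (p q : ℂ) : ℂ := ∫ x, A.kernel r i j p q x ∂μ

/-- The integral of `weight / eval p ^ N`. -/
def moment (A : AffineFamily μ N) (p : ℂ) : ℂ := ∫ x, A.weight x * (A.eval x p ^ N)⁻¹ ∂μ

variable (A : AffineFamily μ N)

lemma eval_sub_eval (x : X) (p q : ℂ) : A.eval x p - A.eval x q = A.slope x * (p - q) := by
  simp only [eval]
  ring

lemma measurable_eval (p : ℂ) : Measurable fun x => A.eval x p :=
  (A.measurable_slope.mul_const p).add A.measurable_offset

lemma measurable_kernel (r i j : ℕ) (p q : ℂ) : Measurable (A.kernel r i j p q) :=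
  ((A.measurable_slope.pow_const r).mul A.measurable_weight).mul
    (((A.measurable_eval p).pow_const i).mul ((A.measurable_eval q).pow_const j)).inv

variable {A}

lemma exists_ball_lower_bound (hq : q ∈ A.regularSet) :
    ∃ c > 0, ∀ᵐ x ∂μ, ∀ q' ∈ Metric.ball q c, c * A.size x ≤ ‖A.eval x q'‖ := by
  obtain ⟨c, hc, hcq⟩ := hq
  refine ⟨c / 2, half_pos hc, hcq.mono fun x hx q' hq' => ?_⟩
  have hdiff : ‖A.eval x q - A.eval x q'‖ ≤ A.size x * (c / 2) := by
    rw [eval_sub_eval, norm_mul, norm_sub_rev, ← dist_eq_norm]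
    exact mul_le_mul (A.norm_slope_le x) hq'.le dist_nonneg (A.size_pos x).le
  linarith [norm_sub_norm_le (A.eval x q) (A.eval x q')]

lemma isOpen_regularSet : IsOpen A.regularSet := by
  refine Metric.isOpen_iff.mpr fun q hq => ?_
  obtain ⟨c, hc, hball⟩ := exists_ball_lower_bound hq
  exact ⟨c, hc, fun q' hq' => ⟨c, hc, hball.mono fun x hx => hx q' hq'⟩⟩

lemma ae_eval_ne_zero (hp : p ∈ A.regularSet) : ∀ᵐ x ∂μ, A.eval x p ≠ 0 := by
  obtain ⟨c, hc, hcp⟩ := hp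
  exact hcp.mono fun x hx => norm_pos_iff.mp ((mul_pos hc (A.size_pos x)).trans_le hx)

lemma norm_kernel_le {c c' : ℝ} {x : X} (hc : 0 < c) (hc' : 0 < c')
    (hp : c * A.size x ≤ ‖A.eval x p‖) (hq : c' * A.size x ≤ ‖A.eval x q‖) (hij : i + j = N + r) :
    ‖A.kernel r i j p q x‖ ≤ (c ^ i * c' ^ j)⁻¹ * ‖A.weight x / A.size x ^ N‖ := by
  have hs := A.size_pos x
  calc ‖A.kernel r i j p q x‖
      = ‖A.slope x‖ ^ r * ‖A.weight x‖ * (‖A.eval x p‖ ^ i * ‖A.eval x q‖ ^ j)⁻¹ := by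
        simp [kernel]
    _ ≤ A.size x ^ r * ‖A.weight x‖ * ((c * A.size x) ^ i * (c' * A.size x) ^ j)⁻¹ := by
        gcongr
        exact A.norm_slope_le x
    _ = A.size x ^ r * ‖A.weight x‖ * (c ^ i * c' ^ j * A.size x ^ (N + r))⁻¹ := by
        rw [← hij]
        ring
    _ = (c ^ i * c' ^ j)⁻¹ * ‖A.weight x / A.size x ^ N‖ := by
        rw [norm_div, norm_pow, norm_real, Real.norm_of_nonneg hs.le, pow_add]
        field_simp

lemma integrable_kernel (hp : p ∈ A.regularSet) (hq : q ∈ A.regularSet) (hij : i + j = N + r) :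
    Integrable (A.kernel r i j p q) μ := by
  obtain ⟨c, hc, hcp⟩ := hp
  obtain ⟨c', hc', hcq⟩ := hq
  refine Integrable.mono' (A.integrable_weight_div.norm.const_mul (c ^ i * c' ^ j)⁻¹)
    (A.measurable_kernel r i j p q).aestronglyMeasurable ?_
  filter_upwards [hcp, hcq] with x hxp hxq using norm_kernel_le hc hc' hxp hxq hij

lemma hasDerivAt_kernel {x : X} (hq : A.eval x q ≠ 0) :
    HasDerivAt (fun q => A.kernel r i j p q x) (-j * A.kernel (r + 1) i (j + 1) p q x) q := by
  have hlin : HasDerivAt (A.eval x) (A.slope x) q :=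
    (((hasDerivAt_id q).const_mul (A.slope x)).add_const (A.offset x)).congr_deriv (mul_one _)
  have hinv : HasDerivAt (fun q => (A.eval x q ^ j)⁻¹)
      (-(j * A.slope x) * (A.eval x q ^ (j + 1))⁻¹) q := by
    refine ((hlin.fun_pow j).fun_inv (pow_ne_zero j hq)).congr_deriv ?_
    rcases j with _ | j
    · simp
    · rw [Nat.add_sub_cancel]
      field_simp
      ring
  simp only [kernel, mul_inv, ← mul_assoc]
  refine (hinv.const_mul (A.slope x ^ r * A.weight x * (A.eval x p ^ i)⁻¹)).congr_deriv ?_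
  ring

lemma hasDerivAt_pairing (hp : p ∈ A.regularSet) (hq : q ∈ A.regularSet) (hij : i + j = N + r) :
    HasDerivAt (fun q => A.pairing r i j p q) (-j * A.pairing (r + 1) i (j + 1) p q) q := by
  obtain ⟨c', hc', hball⟩ := exists_ball_lower_bound hq
  obtain ⟨c, hc, hcp⟩ := id hp
  rw [pairing, ← integral_const_mul]
  refine (hasDerivAt_integral_of_dominated_loc_of_deriv_le (Metric.ball_mem_nhds q hc')
    (.of_forall fun q => (A.measurable_kernel r i j p q).aestronglyMeasurable)
    (integrable_kernel hp hq hij)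
    (F' := fun q x => -j * A.kernel (r + 1) i (j + 1) p q x)
    ((A.measurable_kernel (r + 1) i (j + 1) p q).const_mul (-j : ℂ)).aestronglyMeasurable
    (bound := fun x => j * ((c ^ i * c' ^ (j + 1))⁻¹ * ‖A.weight x / A.size x ^ N‖))
    ?_ ((A.integrable_weight_div.norm.const_mul _).const_mul _) ?_).2
  · filter_upwards [hcp, hball] with x hxp hxq q' hq'
    rw [norm_mul, norm_neg, norm_natCast]
    exact mul_le_mul_of_nonneg_left
      (norm_kernel_le hc hc' hxp (hxq q' hq') (by omega)) j.cast_nonneg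
  · filter_upwards [hball] with x hxq q' hq'
    exact hasDerivAt_kernel
      (norm_pos_iff.mp ((mul_pos hc' (A.size_pos x)).trans_le (hxq q' hq')))

lemma analyticAt_pairing (hp : p ∈ A.regularSet) (hq : q ∈ A.regularSet) (hij : i + j = N) :
    AnalyticAt ℂ (fun q => A.pairing 0 i j p q) q :=
  DifferentiableOn.analyticAt
    (fun _ hq' => (hasDerivAt_pairing hp hq' hij).differentiableAt.differentiableWithinAt)
    (isOpen_regularSet.mem_nhds hq)

lemma sub_mul_pairing (hp : p ∈ A.regularSet) (hq : q ∈ A.regularSet) (hij : i + j + 1 = N + r) :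
    (p - q) * A.pairing (r + 1) (i + 1) (j + 1) p q =
      A.pairing r i (j + 1) p q - A.pairing r (i + 1) j p q := by
  simp only [pairing]
  rw [← integral_const_mul, ← integral_sub (integrable_kernel hp hq (by omega))
    (integrable_kernel hp hq (by omega))]
  refine integral_congr_ae ?_
  filter_upwards [ae_eval_ne_zero hp, ae_eval_ne_zero hq] with x hxp hxq
  simp only [kernel]
  field_simp
  linear_combination (-(A.slope x ^ r * A.weight x * A.eval x p ^ i * A.eval x q ^ j)) *
    A.eval_sub_eval x p q

lemma pairing_zero_zero : A.pairing 0 0 N p q = A.moment q := by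
  simp [pairing, kernel, moment]

lemma pairing_zero_self (hij : i + j = N) : A.pairing 0 i j p p = A.moment p := by
  simp [pairing, kernel, moment, ← pow_add, hij]

lemma hasDerivAt_sub_pow_mul_pairing {A : AffineFamily μ (d + 2)} (hp : p ∈ A.regularSet)
    (hq : q ∈ A.regularSet) :
    HasDerivAt (fun q => (p - q) ^ (d + 1) * A.pairing 0 1 (d + 1) p q)
      (-(d + 1) * (p - q) ^ d * A.moment q) q := by
  have hpow : HasDerivAt (fun q => (p - q) ^ (d + 1)) (-(d + 1) * (p - q) ^ d) q := by
    simpa [neg_mul, -neg_add_rev] using ((hasDerivAt_id q).const_sub p).fun_pow (d + 1)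
  have hsub := sub_mul_pairing (i := 0) (r := 0) (j := d + 1) hp hq (by omega)
  rw [pairing_zero_zero] at hsub
  refine (hpow.mul (hasDerivAt_pairing hp hq (by omega))).congr_deriv ?_
  push_cast
  linear_combination (-(d + 1) * (p - q) ^ d) * hsub

lemma sub_pow_mul_kernel_eq (m : ℕ) {τ₀ σ : ℂ} {x : X} (hτ₀ : A.eval x τ₀ ≠ 0)
    (hτ : A.eval x τ ≠ 0) (hσ : A.eval x σ ≠ 0) :
    (τ - σ) ^ m * A.kernel 0 1 m τ σ x =
      (τ - τ₀) ^ m * A.kernel 0 m 1 τ₀ τ x + ∑ i ∈ Finset.range m,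
        (τ - τ₀) ^ (m - 1 - i) * (τ - σ) ^ i *
          ((τ₀ - σ) * A.kernel 0 (m - i) (i + 1) τ₀ σ x) := by
  have hlin : (τ - σ) * A.eval x τ₀ - (τ - τ₀) * A.eval x σ = (τ₀ - σ) * A.eval x τ := by
    simp only [eval]
    ring
  have hgeom := (Commute.all ((τ - σ) * A.eval x τ₀) ((τ - τ₀) * A.eval x σ)).mul_geom_sum₂ m
  rw [hlin, Finset.mul_sum] at hgeom
  have hterm (i : ℕ) (hi : i ∈ Finset.range m) :
      (τ - τ₀) ^ (m - 1 - i) * (τ - σ) ^ i * ((τ₀ - σ) * A.kernel 0 (m - i) (i + 1) τ₀ σ x) =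
        A.weight x / (A.eval x τ₀ ^ m * A.eval x σ ^ m * A.eval x τ) *
          ((τ₀ - σ) * A.eval x τ * (((τ - σ) * A.eval x τ₀) ^ i *
            ((τ - τ₀) * A.eval x σ) ^ (m - 1 - i))) := by
    obtain ⟨e, rfl⟩ := Nat.exists_eq_add_of_lt (Finset.mem_range.mp hi)
    rw [show i + e + 1 - 1 - i = e by omega, show i + e + 1 - i = e + 1 by omega]
    simp only [kernel, mul_pow]
    field_simp
    ring
  rw [Finset.sum_congr rfl hterm, ← Finset.mul_sum, hgeom]
  simp only [kernel, mul_pow]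
  field_simp
  ring

lemma sub_pow_mul_pairing_eq {m : ℕ} {A : AffineFamily μ (m + 1)} {τ₀ σ : ℂ}
    (hτ₀ : τ₀ ∈ A.regularSet) (hτ : τ ∈ A.regularSet) (hσ : σ ∈ A.regularSet) :
    (τ - σ) ^ m * A.pairing 0 1 m τ σ =
      (τ - τ₀) ^ m * A.pairing 0 m 1 τ₀ τ + ∑ i ∈ Finset.range m,
        (τ - τ₀) ^ (m - 1 - i) * (τ - σ) ^ i *
          ((τ₀ - σ) * A.pairing 0 (m - i) (i + 1) τ₀ σ) := by
  have hint (i : ℕ) (hi : i ∈ Finset.range m) : Integrable (fun x =>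
      (τ - τ₀) ^ (m - 1 - i) * (τ - σ) ^ i *
        ((τ₀ - σ) * A.kernel 0 (m - i) (i + 1) τ₀ σ x)) μ :=
    ((integrable_kernel hτ₀ hσ (by have := Finset.mem_range.mp hi; omega)).const_mul _).const_mul _
  simp only [pairing, ← integral_const_mul]
  rw [← integral_finsetSum _ hint, ← integral_add
    ((integrable_kernel hτ₀ hτ (by omega)).const_mul _) (integrable_finsetSum _ hint)]
  refine integral_congr_ae ?_
  filter_upwards [ae_eval_ne_zero hτ₀, ae_eval_ne_zero hτ, ae_eval_ne_zero hσ] with x h₀ h h'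
  exact sub_pow_mul_kernel_eq m h₀ h h'

/-- The function on `ℂ` whose Wirtinger derivatives `∂/∂τ̄` and `(∂/∂τ)^(d+1)` are both given by
`moment`, evaluated at `conj τ` and at `τ`. -/
def harmonicLift (A : AffineFamily μ (d + 2)) (τ : ℂ) : ℂ :=
  (τ - starRingEnd ℂ τ) ^ (d + 1) * A.pairing 0 1 (d + 1) τ (starRingEnd ℂ τ)

variable {A : AffineFamily μ (d + 2)}

lemma exists_harmonicLift_expansion (hτ : τ ∈ A.regularSet)
    (hτ' : starRingEnd ℂ τ ∈ A.regularSet) :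
    ∃ F, IsPolynomialBelow (d + 1) τ F ∧
      (A.harmonicLift =ᶠ[nhds τ] fun z =>
        (z - τ) ^ (d + 1) * A.pairing 0 (d + 1) 1 τ z + F z (starRingEnd ℂ z)) ∧
      F τ =ᶠ[nhds (starRingEnd ℂ τ)] fun σ => (τ - σ) ^ (d + 1) * A.pairing 0 1 (d + 1) τ σ := by
  have hconj : ∀ᶠ z in nhds τ, starRingEnd ℂ z ∈ A.regularSet :=
    (continuous_conj.tendsto τ).eventually (isOpen_regularSet.mem_nhds hτ')
  refine ⟨fun z σ => ∑ i ∈ Finset.range (d + 1), (z - τ) ^ (d - i) * (z - σ) ^ i *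
    ((τ - σ) * A.pairing 0 (d + 1 - i) (i + 1) τ σ), .sum _ fun i hi => ?_, ?_, ?_⟩
  · have hi := Finset.mem_range.mp hi
    exact .pow_mul_pow_mul ((analyticAt_const.sub analyticAt_id).mul
      (analyticAt_pairing hτ hτ' (by omega))) (by omega)
  · filter_upwards [isOpen_regularSet.mem_nhds hτ, hconj] with z hz hz'
    exact sub_pow_mul_pairing_eq hτ hz hz'
  · filter_upwards [isOpen_regularSet.mem_nhds hτ'] with σ hσ
    simpa using (sub_pow_mul_pairing_eq hτ hτ hσ).symm

variable {f : ℂ → ℂ}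

lemma iterate_Dop_of_eventuallyEq_harmonicLift (hf : f =ᶠ[nhds τ] A.harmonicLift)
    (hτ : τ ∈ A.regularSet) (hτ' : starRingEnd ℂ τ ∈ A.regularSet) :
    Dop^[d + 1] f τ = (2 * π * I)⁻¹ ^ (d + 1) * (d + 1).factorial * A.moment τ := by
  obtain ⟨F, hF, hlift, -⟩ := exists_harmonicLift_expansion hτ hτ'
  rw [iterate_Dop_of_isPolynomialBelow (analyticAt_pairing (i := d + 1) (j := 1) hτ hτ rfl) hF
      (hf.trans hlift),
    pairing_zero_self (i := d + 1) (j := 1) rfl]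

lemma dtaubar_of_eventuallyEq_harmonicLift (hf : f =ᶠ[nhds τ] A.harmonicLift)
    (hτ : τ ∈ A.regularSet) (hτ' : starRingEnd ℂ τ ∈ A.regularSet) :
    dtaubar f τ = -(d + 1) * (τ - starRingEnd ℂ τ) ^ d * A.moment (starRingEnd ℂ τ) := by
  obtain ⟨F, hF, hlift, hFτ⟩ := exists_harmonicLift_expansion hτ hτ'
  rw [dtaubar_of_isPolynomialBelow (analyticAt_pairing (i := d + 1) (j := 1) hτ hτ rfl) hF
      (hf.trans hlift),
    hFτ.deriv_eq, (hasDerivAt_sub_pow_mul_pairing hτ hτ').deriv]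

end AffineFamily

end AffineFamilies

section MoebiusAction

variable {M N : SL2Z} {τ : ℂ}

/-- Numerator `aτ + b` of the Möbius action, the companion of `jfac`. -/
def nfac (M : SL2Z) (τ : ℂ) : ℂ := (M.1 0 0 : ℂ) * τ + (M.1 0 1 : ℂ)

lemma det_eq_one (M : SL2Z) : M.1 0 0 * M.1 1 1 - M.1 0 1 * M.1 1 0 = 1 := by
  rw [← Matrix.det_fin_two, M.2]

lemma moeb_eq_div (M : SL2Z) (τ : ℂ) : moeb M τ = nfac M τ / jfac M τ := rfl

lemma im_nfac_mul_conj_jfac (M : SL2Z) (τ : ℂ) :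
    (nfac M τ * starRingEnd ℂ (jfac M τ)).im = τ.im := by
  have hdet : (M.1 0 0 : ℝ) * M.1 1 1 - M.1 0 1 * M.1 1 0 = 1 := mod_cast det_eq_one M
  simp only [nfac, jfac, map_add, map_mul, map_intCast, mul_im, add_re, add_im, mul_re, conj_re,
    conj_im, intCast_re, intCast_im]
  linear_combination τ.im * hdet

lemma jfac_ne_zero (M : SL2Z) (hτ : τ.im ≠ 0) : jfac M τ ≠ 0 := by
  intro h
  exact hτ (by rw [← im_nfac_mul_conj_jfac M τ, h, map_zero, mul_zero, zero_im])

lemma nfac_ne_zero (M : SL2Z) (hτ : τ.im ≠ 0) : nfac M τ ≠ 0 := by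
  intro h
  exact hτ (by rw [← im_nfac_mul_conj_jfac M τ, h, zero_mul, zero_im])

lemma moeb_ne_zero (M : SL2Z) (hτ : τ.im ≠ 0) : moeb M τ ≠ 0 :=
  div_ne_zero (nfac_ne_zero M hτ) (jfac_ne_zero M hτ)

lemma moeb_eq_mul_conj_div (M : SL2Z) (τ : ℂ) :
    moeb M τ = nfac M τ * starRingEnd ℂ (jfac M τ) / (normSq (jfac M τ) : ℝ) := by
  rw [moeb_eq_div, div_eq_mul_inv, inv_def, ofReal_inv, ← mul_assoc, div_eq_mul_inv]

lemma moeb_im (M : SL2Z) (τ : ℂ) : (moeb M τ).im = τ.im / normSq (jfac M τ) := by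
  rw [moeb_eq_mul_conj_div, div_ofReal_im, im_nfac_mul_conj_jfac]

lemma moeb_re (M : SL2Z) (τ : ℂ) :
    (moeb M τ).re = (nfac M τ * starRingEnd ℂ (jfac M τ)).re / normSq (jfac M τ) := by
  rw [moeb_eq_mul_conj_div, div_ofReal_re]

lemma jfac_conj (M : SL2Z) (τ : ℂ) : jfac M (starRingEnd ℂ τ) = starRingEnd ℂ (jfac M τ) := by
  simp [jfac]

lemma nfac_conj (M : SL2Z) (τ : ℂ) : nfac M (starRingEnd ℂ τ) = starRingEnd ℂ (nfac M τ) := by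
  simp [nfac]

lemma moeb_conj (M : SL2Z) (τ : ℂ) : moeb M (starRingEnd ℂ τ) = starRingEnd ℂ (moeb M τ) := by
  rw [moeb_eq_div, moeb_eq_div, nfac_conj, jfac_conj, map_div₀]

lemma jfac_mul (M : SL2Z) (hN : jfac N τ ≠ 0) :
    jfac (M * N) τ = jfac M (moeb N τ) * jfac N τ := by
  simp only [jfac, Matrix.SpecialLinearGroup.coe_mul, Matrix.mul_apply, Fin.sum_univ_two,
    Int.cast_add, Int.cast_mul] at hN ⊢
  rw [moeb]
  field_simp
  ring

lemma nfac_mul (M : SL2Z) (hN : jfac N τ ≠ 0) :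
    nfac (M * N) τ = nfac M (moeb N τ) * jfac N τ := by
  simp only [jfac, nfac, Matrix.SpecialLinearGroup.coe_mul, Matrix.mul_apply, Fin.sum_univ_two,
    Int.cast_add, Int.cast_mul] at hN ⊢
  rw [moeb]
  field_simp
  ring

lemma moeb_mul (M : SL2Z) (hN : jfac N τ ≠ 0) : moeb (M * N) τ = moeb M (moeb N τ) := by
  rw [moeb_eq_div, moeb_eq_div, nfac_mul M hN, jfac_mul M hN, mul_div_mul_right _ _ hN]

lemma jfac_S (τ : ℂ) : jfac ModularGroup.S τ = τ := by
  simp [jfac, ModularGroup.coe_S]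

lemma moeb_S (τ : ℂ) : moeb ModularGroup.S τ = -τ⁻¹ := by
  simp [moeb, ModularGroup.coe_S, neg_div]

lemma mem_E1_of_moeb_re_eq_zero (hτ : 0 < τ.im) (h : (moeb M τ).re = 0) : τ ∈ E1 := by
  have hpos : 0 < (moeb M τ).im := by
    rw [moeb_im]
    exact div_pos hτ (normSq_pos.mpr (jfac_ne_zero M hτ.ne'))
  have haxis : ((moeb M τ).im : ℂ) * I = moeb M τ := by
    apply Complex.ext <;> simp [h]
  refine Set.mem_iUnion.mpr ⟨M⁻¹, (moeb M τ).im, hpos, ?_⟩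
  change moeb M⁻¹ _ = τ
  rw [haxis, ← moeb_mul _ (jfac_ne_zero M hτ.ne'), inv_mul_cancel]
  simp [moeb]

end MoebiusAction

section RowSums

open Filter

variable {M : SL2Z}

/-- Squared Euclidean length of the `i`-th row, by which sums over `SL₂(ℤ)` are majorized. -/
def rowNormSq (M : SL2Z) (i : Fin 2) : ℤ := M.1 i 0 ^ 2 + M.1 i 1 ^ 2

/-- Euclidean inner product of the two rows. It ties their lengths together through Lagrange's
identity and enters the encoding `rowCode`. -/
def rowInner (M : SL2Z) : ℤ := M.1 0 0 * M.1 1 0 + M.1 0 1 * M.1 1 1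

/-- Injective encoding of `SL₂(ℤ)` into `ℤ³`: the second row is determined by the first one up to
an integer multiple of the first row, which the quotient in the last entry detects. -/
def rowCode (M : SL2Z) : ℤ × ℤ × ℤ := (M.1 0 0, M.1 0 1, rowInner M / rowNormSq M 0)

lemma rowNormSq_mul_rowNormSq (M : SL2Z) :
    rowNormSq M 0 * rowNormSq M 1 = rowInner M ^ 2 + 1 := by
  simp only [rowNormSq, rowInner]
  linear_combination (M.1 0 0 * M.1 1 1 - M.1 0 1 * M.1 1 0 + 1) * det_eq_one M

lemma rowNormSq_pos (M : SL2Z) (i : Fin 2) : 0 < rowNormSq M i := by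
  have hmul : 0 < rowNormSq M 0 * rowNormSq M 1 := by
    rw [rowNormSq_mul_rowNormSq]
    positivity
  have hnonneg (i : Fin 2) : 0 ≤ rowNormSq M i := add_nonneg (sq_nonneg _) (sq_nonneg _)
  fin_cases i
  exacts [pos_of_mul_pos_left hmul (hnonneg 1), pos_of_mul_pos_right hmul (hnonneg 0)]

lemma rowCode_injective : Function.Injective rowCode := by
  intro M N h
  simp only [rowCode, Prod.mk.injEq] at h
  obtain ⟨ha, hb, hq⟩ := h
  have hM := det_eq_one M
  have hN := det_eq_one N
  rw [← ha, ← hb] at hN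
  obtain ⟨t, ht⟩ : ∃ t, t = M.1 1 1 * N.1 1 0 - M.1 1 0 * N.1 1 1 := ⟨_, rfl⟩
  have hc : N.1 1 0 = M.1 1 0 + t * M.1 0 0 := by
    rw [ht]
    linear_combination M.1 1 0 * hN - N.1 1 0 * hM
  have hd : N.1 1 1 = M.1 1 1 + t * M.1 0 1 := by
    rw [ht]
    linear_combination M.1 1 1 * hN - N.1 1 1 * hM
  have hinner : rowInner N = rowInner M + t * rowNormSq M 0 := by
    simp only [rowInner, rowNormSq, ← ha, ← hb, hc, hd]
    ring
  have hnorm : rowNormSq N 0 = rowNormSq M 0 := by simp only [rowNormSq, ha, hb]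
  rw [hnorm, hinner, Int.add_mul_ediv_right _ _ (rowNormSq_pos M 0).ne', left_eq_add] at hq
  rw [hq, zero_mul, add_zero] at hc hd
  ext i j
  fin_cases i <;> fin_cases j
  exacts [ha, hb, hc.symm, hd.symm]

lemma sq_mul_one_add_ediv_sq_le {a s b : ℤ} (ha : 0 < a) (hab : a ≤ b) (hs : a * b = s ^ 2 + 1) :
    a ^ 2 * (1 + (s / a) ^ 2) ≤ 5 * (a * b) := by
  have hdiv := Int.mul_ediv_add_emod s a
  have hmod : (s % a) ^ 2 ≤ a ^ 2 :=
    pow_le_pow_left₀ (Int.emod_nonneg s ha.ne') (Int.emod_lt_of_pos s ha).le 2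
  have hle : a ^ 2 ≤ a * b := by nlinarith
  have hq : (a * (s / a)) ^ 2 ≤ 2 * s ^ 2 + 2 * a ^ 2 := by
    rw [← eq_sub_iff_add_eq] at hdiv
    rw [hdiv]
    nlinarith [sq_nonneg (s + s % a)]
  linarith

lemma prod_one_add_rowCode_sq_le (h : rowNormSq M 0 ≤ rowNormSq M 1) :
    (1 + (rowCode M).1 ^ 2) * ((1 + (rowCode M).2.1 ^ 2) * (1 + (rowCode M).2.2 ^ 2)) ≤
      20 * (rowNormSq M 0 * rowNormSq M 1) := by
  have hpos := rowNormSq_pos M 0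
  have ha : 1 + M.1 0 0 ^ 2 ≤ 2 * rowNormSq M 0 := by
    simp only [rowNormSq] at hpos ⊢
    nlinarith [sq_nonneg (M.1 0 1)]
  have hb : 1 + M.1 0 1 ^ 2 ≤ 2 * rowNormSq M 0 := by
    simp only [rowNormSq] at hpos ⊢
    nlinarith [sq_nonneg (M.1 0 0)]
  calc _ = (1 + M.1 0 0 ^ 2) * (1 + M.1 0 1 ^ 2) * (1 + (rowInner M / rowNormSq M 0) ^ 2) := by
        simp only [rowCode, mul_assoc]
    _ ≤ (2 * rowNormSq M 0) * (2 * rowNormSq M 0) *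
          (1 + (rowInner M / rowNormSq M 0) ^ 2) := by gcongr
    _ ≤ 20 * (rowNormSq M 0 * rowNormSq M 1) := by
        linarith [sq_mul_one_add_ediv_sq_le hpos h (rowNormSq_mul_rowNormSq M)]

lemma summable_one_div_one_add_int_sq : Summable fun m : ℤ => 1 / (1 + (m : ℝ) ^ 2) := by
  refine (Real.summable_one_div_int_pow.mpr one_lt_two).of_norm_bounded_eventually ?_
  filter_upwards [eventually_cofinite_ne 0] with m hm
  have hm_sq : 0 < (m : ℝ) ^ 2 := sq_pos_of_ne_zero (mod_cast hm)
  rw [Real.norm_of_nonneg (by positivity)]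
  exact one_div_le_one_div_of_le hm_sq (le_add_of_nonneg_left zero_le_one)

lemma summable_one_div_rowNormSq :
    Summable fun M : SL2Z => 1 / ((rowNormSq M 0 : ℝ) * rowNormSq M 1) := by
  set u : ℤ → ℝ := fun m => 1 / (1 + (m : ℝ) ^ 2) with hu
  have hu0 (m : ℤ) : 0 ≤ u m := by positivity
  have hsum : Summable fun x : ℤ × ℤ × ℤ => u x.1 * (u x.2.1 * u x.2.2) :=
    summable_one_div_one_add_int_sq.mul_of_nonneg
      (summable_one_div_one_add_int_sq.mul_of_nonneg summable_one_div_one_add_int_sq hu0 hu0)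
      hu0 (fun x => mul_nonneg (hu0 _) (hu0 _))
  set v : SL2Z → ℝ := fun M =>
    20 * (u (rowCode M).1 * (u (rowCode M).2.1 * u (rowCode M).2.2)) with hv
  have hv0 (M : SL2Z) : 0 ≤ v M := by positivity
  have hvs : Summable v := (hsum.comp_injective rowCode_injective).mul_left 20
  have hpos (M : SL2Z) : (0 : ℝ) < rowNormSq M 0 * rowNormSq M 1 :=
    mod_cast mul_pos (rowNormSq_pos M 0) (rowNormSq_pos M 1)
  have hle (M : SL2Z) (h : rowNormSq M 0 ≤ rowNormSq M 1) :
      1 / ((rowNormSq M 0 : ℝ) * rowNormSq M 1) ≤ v M := by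
    simp only [hv, hu]
    rw [one_div_mul_one_div, one_div_mul_one_div, mul_one_div,
      div_le_div_iff₀ (hpos M) (by positivity), one_mul]
    exact_mod_cast prod_one_add_rowCode_sq_le h
  have hS (M : SL2Z) : rowNormSq (ModularGroup.S * M) 0 = rowNormSq M 1 ∧
      rowNormSq (ModularGroup.S * M) 1 = rowNormSq M 0 := by
    simp [rowNormSq, ModularGroup.coe_S, Matrix.mul_apply, Fin.sum_univ_two]
  refine .of_nonneg_of_le (fun M => one_div_nonneg.mpr (hpos M).le) (fun M => ?_)
    (hvs.add (hvs.comp_injective (mul_right_injective ModularGroup.S)))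
  rcases le_total (rowNormSq M 0) (rowNormSq M 1) with h | h
  · exact (hle M h).trans (le_add_of_nonneg_right (hv0 _))
  · have hle' := hle (ModularGroup.S * M) (by rwa [(hS M).1, (hS M).2])
    rw [(hS M).1, (hS M).2, mul_comm] at hle'
    exact hle'.trans (le_add_of_nonneg_left (hv0 M))

end RowSums

section LowerBound

open Filter

variable {τ : ℂ}

lemma exists_sq_add_sq_le_mul_normSq (hτ : τ.im ≠ 0) :
    ∃ K > 0, ∀ x y : ℝ, x ^ 2 + y ^ 2 ≤ K * normSq (x * τ + y) := by
  refine ⟨2 + (1 + 2 * τ.re ^ 2) / τ.im ^ 2, by positivity, fun x y => ?_⟩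
  have hnorm : normSq (x * τ + y) = (x * τ.re + y) ^ 2 + x ^ 2 * τ.im ^ 2 := by
    simp only [normSq_apply, add_re, add_im, re_ofReal_mul, im_ofReal_mul, ofReal_re, ofReal_im]
    ring
  have hy : y ^ 2 ≤ 2 * (x * τ.re + y) ^ 2 + 2 * (x * τ.re) ^ 2 := by
    nlinarith [sq_nonneg (2 * (x * τ.re) + y)]
  calc x ^ 2 + y ^ 2 ≤ 2 * (x * τ.re + y) ^ 2 + (1 + 2 * τ.re ^ 2) / τ.im ^ 2 *
        (x ^ 2 * τ.im ^ 2) := by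
        field_simp
        linarith
    _ ≤ (2 + (1 + 2 * τ.re ^ 2) / τ.im ^ 2) * normSq (x * τ + y) := by
        rw [hnorm, add_mul]
        gcongr
        · exact le_add_of_nonneg_right (by positivity)
        · exact le_add_of_nonneg_left (sq_nonneg _)

lemma exists_rowNormSq_le_mul_normSq (hτ : τ.im ≠ 0) :
    ∃ K > 0, ∀ M : SL2Z, (rowNormSq M 0 : ℝ) ≤ K * normSq (nfac M τ) ∧
      (rowNormSq M 1 : ℝ) ≤ K * normSq (jfac M τ) := by
  obtain ⟨K, hK, hle⟩ := exists_sq_add_sq_le_mul_normSq hτ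
  exact ⟨K, hK, fun M => ⟨by simpa [rowNormSq, nfac] using hle (M.1 0 0) (M.1 0 1),
    by simpa [rowNormSq, jfac] using hle (M.1 1 0) (M.1 1 1)⟩⟩

lemma normSq_mul_I_mul_jfac_sub_nfac (M : SL2Z) (τ : ℂ) (y : ℝ) :
    normSq (y * I * jfac M τ - nfac M τ) =
      y ^ 2 * normSq (jfac M τ) + normSq (nfac M τ) - 2 * y * τ.im := by
  have hre : (y * I * jfac M τ * starRingEnd ℂ (nfac M τ)).re = y * τ.im := by
    rw [← im_nfac_mul_conj_jfac M τ]
    simp only [mul_re, mul_im, conj_re, conj_im, ofReal_re, ofReal_im, I_re, I_im]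
    ring
  rw [normSq_sub, hre, normSq_mul, normSq_mul, normSq_I, normSq_ofReal]
  ring

lemma tendsto_normSq_nfac_mul_normSq_jfac (hτ : τ.im ≠ 0) :
    Tendsto (fun M : SL2Z => normSq (nfac M τ) * normSq (jfac M τ)) cofinite atTop := by
  obtain ⟨K, hK, hle⟩ := exists_rowNormSq_le_mul_normSq hτ
  have hpos (M : SL2Z) (i : Fin 2) : (0 : ℝ) < rowNormSq M i := mod_cast rowNormSq_pos M i
  have hrow : Tendsto (fun M : SL2Z => (rowNormSq M 0 : ℝ) * rowNormSq M 1) cofinite atTop := by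
    have hzero := summable_one_div_rowNormSq.tendsto_cofinite_zero
    have hgt := tendsto_nhdsWithin_iff.mpr ⟨hzero, .of_forall fun M =>
      one_div_pos.mpr (mul_pos (hpos M 0) (hpos M 1))⟩
    exact (tendsto_inv_nhdsGT_zero.comp hgt).congr fun M => by simp [mul_comm]
  refine tendsto_atTop_mono (fun M => ?_) (hrow.const_mul_atTop (inv_pos.mpr (mul_pos hK hK)))
  rw [inv_mul_le_iff₀ (mul_pos hK hK), mul_mul_mul_comm]
  exact mul_le_mul (hle M).1 (hle M).2 (hpos M 1).le (mul_nonneg hK.le (normSq_nonneg _))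

lemma exists_two_mul_im_le (hτ : 0 < τ.im) (hE : τ ∉ E1) :
    ∃ s < 1, ∀ (M : SL2Z) (y : ℝ),
      2 * y * τ.im ≤ s * (y ^ 2 * normSq (jfac M τ) + normSq (nfac M τ)) := by
  obtain ⟨M₀, hM₀⟩ := (tendsto_normSq_nfac_mul_normSq_jfac hτ.ne').exists_forall_le
  have hlt : τ.im ^ 2 < normSq (nfac M₀ τ) * normSq (jfac M₀ τ) := by
    have hre : (nfac M₀ τ * starRingEnd ℂ (jfac M₀ τ)).re ≠ 0 := fun h =>
      hE (mem_E1_of_moeb_re_eq_zero (M := M₀) hτ (by rw [moeb_re, h, zero_div]))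
    rw [← normSq_conj (jfac M₀ τ), ← normSq_mul, normSq_apply, im_nfac_mul_conj_jfac]
    nlinarith [sq_pos_of_ne_zero hre]
  set m := normSq (nfac M₀ τ) * normSq (jfac M₀ τ)
  have hm : τ.im < √m := Real.lt_sqrt_of_sq_lt hlt
  refine ⟨τ.im / √m, (div_lt_one (hτ.trans hm)).mpr hm, fun M y => ?_⟩
  -- AM-GM: the minimal value `m` bounds the sum from below by `2 * y * √m`
  have hamgm : 2 * y * √m ≤ y ^ 2 * normSq (jfac M τ) + normSq (nfac M τ) := by
    refine le_of_abs_le (abs_le_of_sq_le_sq ?_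
      (add_nonneg (mul_nonneg (sq_nonneg y) (normSq_nonneg _)) (normSq_nonneg _)))
    rw [mul_pow, Real.sq_sqrt ((sq_nonneg _).trans hlt.le)]
    nlinarith [sq_nonneg (y ^ 2 * normSq (jfac M τ) - normSq (nfac M τ)),
      mul_le_mul_of_nonneg_left (hM₀ M) (sq_nonneg y)]
  rw [div_mul_eq_mul_div, le_div_iff₀ (hτ.trans hm)]
  linarith [mul_le_mul_of_nonneg_left hamgm hτ.le]

lemma exists_mul_le_normSq (hτ : 0 < τ.im) (hE : τ ∉ E1) :
    ∃ c > 0, ∀ (M : SL2Z) (y : ℝ),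
      c * (y ^ 2 * rowNormSq M 1 + rowNormSq M 0) ≤ normSq (y * I * jfac M τ - nfac M τ) := by
  obtain ⟨K, hK, hle⟩ := exists_rowNormSq_le_mul_normSq hτ.ne'
  obtain ⟨s, hs, hsle⟩ := exists_two_mul_im_le hτ hE
  refine ⟨(1 - s) / K, div_pos (sub_pos.mpr hs) hK, fun M y => ?_⟩
  calc (1 - s) / K * (y ^ 2 * rowNormSq M 1 + rowNormSq M 0)
      ≤ (1 - s) / K * (y ^ 2 * (K * normSq (jfac M τ)) + K * normSq (nfac M τ)) := by
        have := sub_pos.mpr hs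
        gcongr
        exacts [(hle M).2, (hle M).1]
    _ = (1 - s) * (y ^ 2 * normSq (jfac M τ) + normSq (nfac M τ)) := by
        field_simp
    _ ≤ normSq (y * I * jfac M τ - nfac M τ) := by
        rw [normSq_mul_I_mul_jfac_sub_nfac]
        linarith [hsle M y]

lemma normSq_le_normSq_conj (M : SL2Z) (hτ : 0 ≤ τ.im) {y : ℝ} (hy : 0 ≤ y) :
    normSq (y * I * jfac M τ - nfac M τ) ≤
      normSq (y * I * jfac M (starRingEnd ℂ τ) - nfac M (starRingEnd ℂ τ)) := by
  rw [normSq_mul_I_mul_jfac_sub_nfac, normSq_mul_I_mul_jfac_sub_nfac, jfac_conj, nfac_conj,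
    normSq_conj, normSq_conj, conj_im]
  linarith [mul_nonneg hy hτ]

end LowerBound

section AxisFamily

open Filter

variable {d n k : ℕ} {p τ : ℂ}

instance : MeasurableSpace SL2Z := ⊤

instance : DiscreteMeasurableSpace SL2Z := ⟨fun _ => trivial⟩

instance : Countable SL2Z := rowCode_injective.countable

/-- Counting measure on `SL₂(ℤ)` times Lebesgue measure on the positive reals, which parametrize
the imaginary half-axis: integrating against it sums over the group and integrates over the axis
at once. -/
def axisMeasure : Measure (SL2Z × ℝ) := Measure.count.prod (volume.restrict (Set.Ioi 0))

instance : SFinite axisMeasure := by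
  unfold axisMeasure
  infer_instance

lemma ae_axisMeasure_pos : ∀ᵐ x ∂axisMeasure, 0 < x.2 :=
  Measure.quasiMeasurePreserving_snd.ae (ae_restrict_mem measurableSet_Ioi)

lemma integral_axisMeasure {f : SL2Z × ℝ → ℂ} (hf : Integrable f axisMeasure) :
    ∫ x, f x ∂axisMeasure = ∑' M, ∫ y in Set.Ioi 0, f (M, y) := by
  rw [axisMeasure] at hf ⊢
  simp [integral_prod f hf, integral_countable hf.integral_prod_left]

lemma integral_axisMeasure_symm {f : SL2Z × ℝ → ℂ} (hf : Integrable f axisMeasure) :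
    ∫ x, f x ∂axisMeasure = ∫ y in Set.Ioi 0, ∑' M, f (M, y) := by
  rw [axisMeasure] at hf ⊢
  rw [integral_prod_symm f hf]
  refine integral_congr_ae ?_
  filter_upwards [hf.prod_left_ae] with y hy
  simp [integral_countable hy]

lemma integrableOn_and_integral_Ioi_div_sq {a c : ℝ} (ha : 0 < a) (hc : 0 < c) :
    IntegrableOn (fun y : ℝ => y / (y ^ 2 * c + a) ^ 2) (Set.Ioi 0) ∧
      ∫ y in Set.Ioi (0 : ℝ), y / (y ^ 2 * c + a) ^ 2 = (2 * (a * c))⁻¹ := by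
  have hder (y : ℝ) : HasDerivAt (fun y : ℝ => -(2 * c)⁻¹ * (y ^ 2 * c + a)⁻¹)
      (y / (y ^ 2 * c + a) ^ 2) y := by
    have hpoly : HasDerivAt (fun y : ℝ => y ^ 2 * c + a) (2 * y * c) y := by
      simpa using (((hasDerivAt_id y).fun_pow 2).mul_const c).add_const a
    refine ((hpoly.fun_inv (by positivity)).const_mul _).congr_deriv ?_
    field_simp
  have hlim : Tendsto (fun y : ℝ => -(2 * c)⁻¹ * (y ^ 2 * c + a)⁻¹) atTop (nhds 0) := by
    rw [← mul_zero (-(2 * c)⁻¹)]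
    exact (tendsto_inv_atTop_zero.comp (tendsto_atTop_add_const_right _ a
      ((tendsto_pow_atTop two_ne_zero).atTop_mul_const hc))).const_mul _
  have hnonneg (y : ℝ) (hy : y ∈ Set.Ioi (0 : ℝ)) : 0 ≤ y / (y ^ 2 * c + a) ^ 2 :=
    div_nonneg (le_of_lt hy) (sq_nonneg _)
  refine ⟨integrableOn_Ioi_deriv_of_nonneg (hder 0).continuousAt.continuousWithinAt
    (fun y _ => hder y) hnonneg hlim, ?_⟩
  rw [integral_Ioi_of_hasDerivAt_of_nonneg' (fun y _ => hder y) hnonneg hlim]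
  field_simp
  ring

/-- Size of the linear form `τ ↦ y i (cτ + d) - (aτ + b)` attached to a matrix and a point `iy` of
the imaginary axis. -/
def axisSize (x : SL2Z × ℝ) : ℝ := √(x.2 ^ 2 * rowNormSq x.1 1 + rowNormSq x.1 0)

lemma axisSize_nonneg (x : SL2Z × ℝ) : 0 ≤ axisSize x := Real.sqrt_nonneg _

lemma axisSize_sq (x : SL2Z × ℝ) :
    axisSize x ^ 2 = x.2 ^ 2 * rowNormSq x.1 1 + rowNormSq x.1 0 := by
  have (i : Fin 2) : (0 : ℝ) < rowNormSq x.1 i := mod_cast rowNormSq_pos x.1 i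
  exact Real.sq_sqrt (add_nonneg (mul_nonneg (sq_nonneg _) (this 1).le) (this 0).le)

lemma sq_add_one_le_axisSize_sq (x : SL2Z × ℝ) : x.2 ^ 2 + 1 ≤ axisSize x ^ 2 := by
  have (i : Fin 2) : (1 : ℝ) ≤ rowNormSq x.1 i := mod_cast rowNormSq_pos x.1 i
  rw [axisSize_sq]
  exact add_le_add (le_mul_of_one_le_right (sq_nonneg _) (this 1)) (this 0)

lemma one_le_axisSize (x : SL2Z × ℝ) : 1 ≤ axisSize x := by
  refine (one_le_sq_iff₀ (axisSize_nonneg x)).mp ?_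
  linarith [sq_add_one_le_axisSize_sq x, sq_nonneg x.2]

lemma le_axisSize (x : SL2Z × ℝ) : x.2 ≤ axisSize x := by
  refine le_of_abs_le (abs_le_of_sq_le_sq ?_ (axisSize_nonneg x))
  linarith [sq_add_one_le_axisSize_sq x]

lemma measurable_axisSize : Measurable axisSize := by
  refine measurable_from_prod_countable_right fun M => ?_
  unfold axisSize
  fun_prop

lemma integrable_div_axisSize_pow_four :
    Integrable (fun x => x.2 / axisSize x ^ 4) axisMeasure := by
  have hpos (M : SL2Z) (i : Fin 2) : (0 : ℝ) < rowNormSq M i := mod_cast rowNormSq_pos M i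
  have hsize (M : SL2Z) (y : ℝ) :
      y / axisSize (M, y) ^ 4 = y / (y ^ 2 * rowNormSq M 1 + rowNormSq M 0) ^ 2 := by
    rw [← axisSize_sq (M, y), ← pow_mul]
  have hmeas : Measurable fun x : SL2Z × ℝ => x.2 / axisSize x ^ 4 :=
    measurable_snd.div (measurable_axisSize.pow_const 4)
  refine (integrable_prod_iff hmeas.aestronglyMeasurable).mpr ⟨.of_forall fun M => ?_, ?_⟩
  · simp only [hsize]
    exact (integrableOn_and_integral_Ioi_div_sq (hpos M 0) (hpos M 1)).1
  rw [integrable_count_iff]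
  refine (summable_one_div_rowNormSq.mul_left (1 / 2)).congr fun M => ?_
  have hnorm : ∫ y in Set.Ioi 0, ‖y / axisSize (M, y) ^ 4‖ =
      ∫ y in Set.Ioi 0, y / axisSize (M, y) ^ 4 :=
    setIntegral_congr_fun measurableSet_Ioi fun y hy =>
      Real.norm_of_nonneg (div_nonneg (le_of_lt hy) (pow_nonneg (axisSize_nonneg _) 4))
  rw [hnorm]
  simp only [hsize]
  rw [(integrableOn_and_integral_Ioi_div_sq (hpos M 0) (hpos M 1)).2, norm_inv, Real.norm_of_nonneg]
  · field_simp
  · exact mul_nonneg zero_le_two (mul_pos (hpos M 0) (hpos M 1)).le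

lemma integrable_pow_div_axisSize_pow (hn : 0 < n) (hnd : n < d) :
    Integrable (fun x => x.2 ^ n / axisSize x ^ (d + 2)) axisMeasure := by
  refine integrable_div_axisSize_pow_four.mono' ((measurable_snd.pow_const n).div
    (measurable_axisSize.pow_const _)).aestronglyMeasurable ?_
  filter_upwards [ae_axisMeasure_pos] with x hx
  have hsize := one_le_axisSize x
  obtain ⟨m, rfl⟩ := Nat.exists_eq_succ_of_ne_zero hn.ne'
  obtain ⟨e, rfl⟩ := Nat.exists_eq_add_of_lt hnd
  have hpow : x.2 ^ m ≤ axisSize x ^ (m + e) :=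
    (pow_le_pow_left₀ hx.le (le_axisSize x) m).trans (pow_le_pow_right₀ hsize (by omega))
  rw [Real.norm_of_nonneg (by positivity), div_le_div_iff₀ (by positivity) (by positivity)]
  calc x.2 ^ (m + 1) * axisSize x ^ 4 = x.2 ^ m * (x.2 * axisSize x ^ 4) := by ring
    _ ≤ axisSize x ^ (m + e) * (x.2 * axisSize x ^ 4) := by gcongr
    _ = x.2 * axisSize x ^ (m + 1 + e + 1 + 2) := by ring

lemma norm_mul_I_mul_sub_le_axisSize (x : SL2Z × ℝ) :
    ‖(x.2 : ℂ) * I * x.1.1 1 0 - x.1.1 0 0‖ ≤ axisSize x := by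
  refine Real.le_sqrt_of_sq_le ?_
  have hnorm : ‖(x.2 : ℂ) * I * x.1.1 1 0 - x.1.1 0 0‖ ^ 2 =
      x.2 ^ 2 * (x.1.1 1 0 : ℝ) ^ 2 + (x.1.1 0 0 : ℝ) ^ 2 := by
    rw [← normSq_eq_norm_sq, normSq_apply]
    simp only [sub_re, sub_im, mul_re, mul_im, ofReal_re, ofReal_im, I_re, I_im, intCast_re,
      intCast_im]
    ring
  rw [hnorm]
  simp only [rowNormSq, Int.cast_add, Int.cast_pow]
  gcongr
  exacts [le_add_of_nonneg_right (sq_nonneg _), le_add_of_nonneg_right (sq_nonneg _)]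

/-- The linear forms `τ ↦ y i (cτ + d) - (aτ + b) = (cτ + d) (iy - Mτ)` that occur in
`H_{k,k-1}(iy, τ)`, weighted by `yⁿ / (4πi)`. -/
def axisFamily (hn : 0 < n) (hnd : n < d) : AffineFamily axisMeasure (d + 2) where
  slope x := x.2 * I * x.1.1 1 0 - x.1.1 0 0
  offset x := x.2 * I * x.1.1 1 1 - x.1.1 0 1
  weight x := (4 * π * I)⁻¹ * x.2 ^ n
  size := axisSize
  measurable_slope := measurable_from_prod_countable_right fun M => by fun_prop
  measurable_offset := measurable_from_prod_countable_right fun M => by fun_prop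
  measurable_weight := by fun_prop
  size_pos x := one_pos.trans_le (one_le_axisSize x)
  norm_slope_le := norm_mul_I_mul_sub_le_axisSize
  integrable_weight_div := by
    simp only [mul_div_assoc]
    exact_mod_cast (integrable_pow_div_axisSize_pow hn hnd).ofReal.const_mul ((4 * π * I : ℂ)⁻¹)

lemma axisFamily_eval (hn : 0 < n) (hnd : n < d) (x : SL2Z × ℝ) (p : ℂ) :
    (axisFamily hn hnd).eval x p = x.2 * I * jfac x.1 p - nfac x.1 p := by
  simp only [AffineFamily.eval, axisFamily, jfac, nfac]
  ring

lemma axisFamily_eval_eq_mul (hn : 0 < n) (hnd : n < d) (x : SL2Z × ℝ) (hp : p.im ≠ 0) :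
    (axisFamily hn hnd).eval x p = jfac x.1 p * (x.2 * I - moeb x.1 p) := by
  rw [axisFamily_eval, moeb_eq_div, mul_sub, mul_div_cancel₀ _ (jfac_ne_zero x.1 hp)]
  ring

lemma mem_regularSet_axisFamily (hn : 0 < n) (hnd : n < d) (hτ : 0 < τ.im) (hE : τ ∉ E1) :
    τ ∈ (axisFamily hn hnd).regularSet ∧
      starRingEnd ℂ τ ∈ (axisFamily hn hnd).regularSet := by
  obtain ⟨c, hc, hle⟩ := exists_mul_le_normSq hτ hE
  have hlower (x : SL2Z × ℝ) (p : ℂ)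
      (h : c * axisSize x ^ 2 ≤ normSq (x.2 * I * jfac x.1 p - nfac x.1 p)) :
      √c * axisSize x ≤ ‖(axisFamily hn hnd).eval x p‖ := by
    refine le_of_sq_le_sq ?_ (norm_nonneg _)
    rwa [mul_pow, Real.sq_sqrt hc.le, axisFamily_eval, ← normSq_eq_norm_sq]
  refine ⟨⟨√c, Real.sqrt_pos.mpr hc, .of_forall fun x => hlower x τ ?_⟩,
    ⟨√c, Real.sqrt_pos.mpr hc, ae_axisMeasure_pos.mono fun x hx => hlower x _ ?_⟩⟩ <;>
    rw [axisSize_sq]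
  · exact hle x.1 x.2
  · exact (hle x.1 x.2).trans (normSq_le_normSq_conj x.1 hτ.le hx.le)

lemma Hpet_summand_eq (hd : 2 * k = d + 2) (hn : 0 < n) (hnd : n < d) (hτ : τ.im ≠ 0)
    (x : SL2Z × ℝ) :
    (2 * I) ^ (2 * k - 2) / (2 * π) * (jfac x.1 τ ^ (2 * k - 2) *
      ((moeb x.1 τ).im : ℂ) ^ (2 * k - 1) * (x.2 * I - moeb x.1 τ)⁻¹ *
        (x.2 * I - starRingEnd ℂ (moeb x.1 τ)) ^ (1 - 2 * (k : ℤ)) * x.2 ^ n) =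
      (τ - starRingEnd ℂ τ) ^ (d + 1) *
        (axisFamily hn hnd).kernel 0 1 (d + 1) τ (starRingEnd ℂ τ) x := by
  have hj := jfac_ne_zero x.1 hτ
  have hj' : starRingEnd ℂ (jfac x.1 τ) ≠ 0 := (map_ne_zero _).mpr hj
  have him : ((moeb x.1 τ).im : ℂ) = τ.im / (jfac x.1 τ * starRingEnd ℂ (jfac x.1 τ)) := by
    rw [moeb_im, mul_conj, ofReal_div]
  rw [AffineFamily.kernel, axisFamily_eval_eq_mul hn hnd x hτ,
    axisFamily_eval_eq_mul hn hnd x (by simpa using hτ), moeb_conj, jfac_conj, him, sub_conj,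
    show 2 * k - 2 = d by omega, show 2 * k - 1 = d + 1 by omega,
    show 1 - 2 * (k : ℤ) = -(d + 1 : ℕ) by omega, zpow_neg, zpow_natCast]
  simp only [axisFamily, ofReal_mul, ofReal_ofNat, mul_pow, div_pow, pow_one, mul_inv, pow_zero]
  field_simp
  ring

lemma Hlhmf_eq_harmonicLift (hd : 2 * k = d + 2) (hn : 0 < n) (hnd : n < d) (hτ : τ.im ≠ 0)
    (hr : τ ∈ (axisFamily hn hnd).regularSet)
    (hr' : starRingEnd ℂ τ ∈ (axisFamily hn hnd).regularSet) :
    Hlhmf k n τ = (axisFamily hn hnd).harmonicLift τ := by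
  rw [Hlhmf, AffineFamily.harmonicLift, AffineFamily.pairing,
    integral_axisMeasure_symm (AffineFamily.integrable_kernel hr hr' (by omega)),
    ← integral_const_mul, ← integral_const_mul]
  refine integral_congr_ae (.of_forall fun y => ?_)
  simp only [Hpet]
  rw [← tsum_mul_right, ← tsum_mul_left, ← tsum_mul_left]
  exact tsum_congr fun M => Hpet_summand_eq hd hn hnd hτ (M, y)

lemma Hlhmf_eventuallyEq_harmonicLift (hd : 2 * k = d + 2) (hn : 0 < n) (hnd : n < d)
    (hτ : 0 < τ.im) (hE : τ ∉ E1) : Hlhmf k n =ᶠ[nhds τ] (axisFamily hn hnd).harmonicLift := by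
  obtain ⟨hr, hr'⟩ := mem_regularSet_axisFamily hn hnd hτ hE
  filter_upwards [AffineFamily.isOpen_regularSet.mem_nhds hr,
    (continuous_conj.tendsto τ).eventually (AffineFamily.isOpen_regularSet.mem_nhds hr'),
    (continuous_im.tendsto τ).eventually (eventually_ne_nhds hτ.ne')] with z hz hz' him
  exact Hlhmf_eq_harmonicLift hd hn hnd him hz hz'

end AxisFamily

section BetaIntegral

open Filter

variable {a : ℂ}

lemma ofReal_add_ne_zero (ha : a ∈ slitPlane) {y : ℝ} (hy : 0 ≤ y) : (y : ℂ) + a ≠ 0 := by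
  intro h
  rw [eq_neg_of_add_eq_zero_right h, mem_slitPlane_iff] at ha
  simp only [neg_re, neg_im, ofReal_re, ofReal_im, neg_zero, ne_eq, not_true, or_false] at ha
  linarith

lemma norm_inv_ofReal_add_le {y : ℝ} (hy : 2 * ‖a‖ < y) : ‖((y : ℂ) + a)⁻¹‖ ≤ 2 * y⁻¹ := by
  have hy0 : 0 < y := by linarith [norm_nonneg a]
  have hle : y - ‖a‖ ≤ ‖(y : ℂ) + a‖ := by
    simpa [abs_of_pos hy0] using norm_sub_le_norm_add (y : ℂ) a
  rw [norm_inv, ← div_eq_mul_inv, ← inv_div]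
  exact inv_anti₀ (by positivity) (by linarith)

lemma isBigO_pow_mul_inv_pow (a : ℂ) (n e : ℕ) :
    (fun y : ℝ => (y : ℂ) ^ n * (((y : ℂ) + a) ^ (n + e))⁻¹) =O[atTop] fun y : ℝ => (y ^ e)⁻¹ := by
  have hinv : (fun y : ℝ => ((y : ℂ) + a)⁻¹) =O[atTop] fun y : ℝ => y⁻¹ := by
    refine .of_bound 2 ?_
    filter_upwards [eventually_gt_atTop (2 * ‖a‖), eventually_ge_atTop 0] with y hy hy0
    rw [norm_inv y, Real.norm_of_nonneg hy0]
    exact norm_inv_ofReal_add_le hy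
  have hcast : (fun y : ℝ => (y : ℂ)) =O[atTop] fun y : ℝ => y :=
    .of_bound' (.of_forall fun y => (norm_real y).le)
  refine ((hcast.pow n).mul (hinv.pow (n + e))).congr' ?_ ?_
  · filter_upwards with y using by rw [inv_pow]
  · filter_upwards [eventually_ne_atTop 0] with y hy
    rw [inv_pow, pow_add]
    field_simp

lemma integrableOn_pow_mul_inv_pow (ha : a ∈ slitPlane) (n e : ℕ) :
    IntegrableOn (fun y : ℝ => (y : ℂ) ^ n * (((y : ℂ) + a) ^ (n + (e + 2)))⁻¹) (Set.Ioi 0) := by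
  have hcont : ContinuousOn (fun y : ℝ => (y : ℂ) ^ n * (((y : ℂ) + a) ^ (n + (e + 2)))⁻¹)
      (Set.Ici 0) :=
    ContinuousOn.mul (by fun_prop) <| ContinuousOn.inv₀ (by fun_prop) fun y hy =>
      pow_ne_zero _ (ofReal_add_ne_zero ha hy)
  have hdecay : IntegrableAtFilter (fun y : ℝ => (y ^ (e + 2))⁻¹) atTop := by
    refine ⟨Set.Ioi 1, Ioi_mem_atTop 1, ?_⟩
    refine (integrableOn_Ioi_rpow_of_lt (a := -(e + 2 : ℕ)) ?_ one_pos).congr_fun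
      (fun y hy => ?_) measurableSet_Ioi
    · push_cast
      linarith [e.cast_nonneg (α := ℝ)]
    · simp only [Real.rpow_neg (one_pos.trans hy).le, Real.rpow_natCast]
  exact ((hcont.locallyIntegrableOn measurableSet_Ici).integrableOn_of_isBigO_atTop
    (isBigO_pow_mul_inv_pow a n (e + 2)) hdecay).mono_set Set.Ioi_subset_Ici_self

lemma tendsto_pow_mul_inv_pow (a : ℂ) (n e : ℕ) :
    Tendsto (fun y : ℝ => (y : ℂ) ^ n * (((y : ℂ) + a) ^ (n + (e + 1)))⁻¹) atTop (nhds 0) :=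
  (isBigO_pow_mul_inv_pow a n (e + 1)).trans_tendsto
    (tendsto_pow_atTop e.succ_ne_zero).inv_tendsto_atTop

lemma hasDerivAt_inv_ofReal_add_pow (ha : a ∈ slitPlane) (m : ℕ) {y : ℝ} (hy : 0 ≤ y) :
    HasDerivAt (fun y : ℝ => (((y : ℂ) + a) ^ m)⁻¹) (-m * (((y : ℂ) + a) ^ (m + 1))⁻¹) y := by
  have hne := ofReal_add_ne_zero ha hy
  have hlin : HasDerivAt (fun y : ℝ => (y : ℂ) + a) 1 y :=
    (hasDerivAt_id y).ofReal_comp.add_const a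
  refine ((hlin.fun_pow m).fun_inv (pow_ne_zero m hne)).congr_deriv ?_
  rcases m with _ | m
  · simp
  · rw [Nat.add_sub_cancel]
    field_simp
    ring

lemma integral_inv_ofReal_add_pow (ha : a ∈ slitPlane) (e : ℕ) :
    ∫ y in Set.Ioi (0 : ℝ), (((y : ℂ) + a) ^ (e + 2))⁻¹ = (a ^ (e + 1))⁻¹ / (e + 1) := by
  have he : (e : ℂ) + 1 ≠ 0 := e.cast_add_one_ne_zero
  have hder (y : ℝ) (hy : 0 ≤ y) :
      HasDerivAt (fun y : ℝ => -(((y : ℂ) + a) ^ (e + 1))⁻¹ / (e + 1))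
        (((y : ℂ) + a) ^ (e + 2))⁻¹ y := by
    refine ((hasDerivAt_inv_ofReal_add_pow ha (e + 1) hy).neg.div_const _).congr_deriv ?_
    push_cast
    field_simp
  have hlim : Tendsto (fun y : ℝ => -(((y : ℂ) + a) ^ (e + 1))⁻¹ / (e + 1)) atTop (nhds 0) := by
    simpa using (tendsto_pow_mul_inv_pow a 0 e).neg.div_const ((e : ℂ) + 1)
  rw [integral_Ioi_of_hasDerivAt_of_tendsto (hder 0 le_rfl).continuousAt.continuousWithinAt
    (fun y hy => hder y (le_of_lt hy)) (by simpa using integrableOn_pow_mul_inv_pow ha 0 e) hlim]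
  simp [neg_div]

lemma integral_pow_succ_mul_inv_pow (ha : a ∈ slitPlane) (n e : ℕ) :
    (n + e + 2) * ∫ y in Set.Ioi (0 : ℝ),
        (y : ℂ) ^ (n + 1) * (((y : ℂ) + a) ^ (n + 1 + (e + 2)))⁻¹ =
      (n + 1) * ∫ y in Set.Ioi (0 : ℝ), (y : ℂ) ^ n * (((y : ℂ) + a) ^ (n + (e + 2)))⁻¹ := by
  have hder (y : ℝ) (hy : 0 ≤ y) :
      HasDerivAt (fun y : ℝ => (y : ℂ) ^ (n + 1) * (((y : ℂ) + a) ^ (n + (e + 2)))⁻¹)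
        ((n + 1) * ((y : ℂ) ^ n * (((y : ℂ) + a) ^ (n + (e + 2)))⁻¹) -
          (n + e + 2) * ((y : ℂ) ^ (n + 1) * (((y : ℂ) + a) ^ (n + 1 + (e + 2)))⁻¹)) y := by
    have hpow : HasDerivAt (fun y : ℝ => (y : ℂ) ^ (n + 1)) ((n + 1) * (y : ℂ) ^ n) y := by
      simpa using (hasDerivAt_id y).ofReal_comp.fun_pow (n + 1)
    refine (hpow.mul (hasDerivAt_inv_ofReal_add_pow ha (n + (e + 2)) hy)).congr_deriv ?_
    rw [show n + 1 + (e + 2) = n + (e + 2) + 1 by omega]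
    push_cast
    ring
  have hint := (integrableOn_pow_mul_inv_pow ha n e).const_mul ((n : ℂ) + 1)
  have hint' := (integrableOn_pow_mul_inv_pow ha (n + 1) e).const_mul ((n : ℂ) + e + 2)
  have hlim := tendsto_pow_mul_inv_pow a (n + 1) e
  rw [show n + 1 + (e + 1) = n + (e + 2) by omega] at hlim
  have hparts := integral_Ioi_of_hasDerivAt_of_tendsto
    (hder 0 le_rfl).continuousAt.continuousWithinAt (fun y hy => hder y (le_of_lt hy))
    (hint.sub hint') hlim
  rw [integral_sub hint hint', integral_const_mul, integral_const_mul, ofReal_zero,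
    zero_pow n.succ_ne_zero, zero_mul, sub_zero] at hparts
  exact (sub_eq_zero.mp hparts).symm

lemma integral_pow_mul_inv_pow (ha : a ∈ slitPlane) (n e : ℕ) :
    ∫ y in Set.Ioi (0 : ℝ), (y : ℂ) ^ n * (((y : ℂ) + a) ^ (n + (e + 2)))⁻¹ =
      (a ^ (e + 1))⁻¹ / ((n + e + 1) * (n + e).choose n) := by
  induction n with
  | zero => simpa using integral_inv_ofReal_add_pow ha e
  | succ n ih =>
    have hchoose :
        ((n + 1 + e).choose (n + 1) : ℂ) * (n + 1) = (n + e + 1) * (n + e).choose n := by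
      exact_mod_cast (by rw [Nat.add_right_comm, ← Nat.add_one_mul_choose_eq] :
        (n + 1 + e).choose (n + 1) * (n + 1) = (n + e + 1) * (n + e).choose n)
    have hstep := integral_pow_succ_mul_inv_pow ha n e
    have hn : (n : ℂ) + 1 ≠ 0 := n.cast_add_one_ne_zero
    have hne : (n : ℂ) + e + 2 ≠ 0 := mod_cast (n + e + 1).succ_ne_zero
    rw [ih, ← hchoose] at hstep
    refine mul_left_cancel₀ hne (hstep.trans ?_)
    push_cast
    rw [show (n : ℂ) + 1 + e + 1 = n + e + 2 by ring]
    field_simp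

end BetaIntegral

section Moments

variable {d e n k : ℕ} {p τ : ℂ} {M : SL2Z}

lemma I_mul_moeb_mem_slitPlane (hτ : 0 < τ.im) (hE : τ ∉ E1) : I * moeb M τ ∈ slitPlane := by
  rw [mem_slitPlane_iff, I_mul_im]
  exact .inr fun h => hE (mem_E1_of_moeb_re_eq_zero hτ h)

lemma I_mul_moeb_conj_mem_slitPlane (hτ : 0 < τ.im) :
    I * moeb M (starRingEnd ℂ τ) ∈ slitPlane := by
  rw [mem_slitPlane_iff, I_mul_re, moeb_conj, conj_im, neg_neg, moeb_im]
  exact .inl (div_pos hτ (normSq_pos.mpr (jfac_ne_zero M hτ.ne')))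

lemma tsum_jfac_zpow_mul_moeb_zpow (hp : p.im ≠ 0) (a b : ℤ) :
    ∑' M : SL2Z, jfac M p ^ a * moeb M p ^ b =
      (-1) ^ b * ∑' M : SL2Z, jfac M p ^ a * moeb M p ^ (a - b) := by
  rw [← (Equiv.mulLeft ModularGroup.S).tsum_eq, ← tsum_mul_left]
  refine tsum_congr fun M => ?_
  have hj := jfac_ne_zero M hp
  have hm := moeb_ne_zero M hp
  rw [Equiv.coe_mulLeft, jfac_mul _ hj, moeb_mul _ hj, jfac_S, moeb_S, neg_eq_neg_one_mul,
    mul_zpow, mul_zpow, inv_zpow, zpow_sub₀ hm]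
  ring

lemma integral_weight_mul_inv_eval_pow (hn : 0 < n) (he : 0 < e) (hp : p.im ≠ 0)
    (hM : I * moeb M p ∈ slitPlane) :
    ∫ y in Set.Ioi 0, (axisFamily hn (Nat.lt_add_of_pos_right he)).weight (M, y) *
        ((axisFamily hn (Nat.lt_add_of_pos_right he)).eval (M, y) p ^ (n + e + 2))⁻¹ =
      (4 * π * I ^ (n + 2 * e + 4) * (n + e + 1) * (n + e).choose n)⁻¹ *
        (jfac M p ^ (-(n + e + 2 : ℤ)) * moeb M p ^ (-(e + 1 : ℤ))) := by
  have heval (y : ℝ) : jfac M p * (y * I - moeb M p) =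
      I * jfac M p * (y + I * moeb M p) := by
    linear_combination (-jfac M p * moeb M p) * I_mul_I
  have hweight (y : ℝ) : (axisFamily hn (Nat.lt_add_of_pos_right he)).weight (M, y) *
      ((axisFamily hn (Nat.lt_add_of_pos_right he)).eval (M, y) p ^ (n + e + 2))⁻¹ =
      (4 * π * I)⁻¹ * ((I * jfac M p) ^ (n + e + 2))⁻¹ *
        (y ^ n * ((y + I * moeb M p) ^ (n + (e + 2)))⁻¹) := by
    rw [axisFamily_eval_eq_mul _ _ _ hp, heval, mul_pow]
    simp only [axisFamily, mul_inv]
    ring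
  simp only [hweight]
  rw [integral_const_mul, integral_pow_mul_inv_pow hM,
    show (n + e + 2 : ℤ) = (n + e + 2 : ℕ) by push_cast; ring,
    show (e + 1 : ℤ) = (e + 1 : ℕ) by push_cast; ring]
  simp only [zpow_neg, zpow_natCast, mul_pow, mul_inv, div_eq_mul_inv]
  ring

lemma moment_axisFamily (hd : 2 * k = d + 2) (hn : 0 < n) (hnd : n < d) (hp : p.im ≠ 0)
    (hreg : p ∈ (axisFamily hn hnd).regularSet) (hslit : ∀ M, I * moeb M p ∈ slitPlane) :
    (axisFamily hn hnd).moment p = (-1) ^ n / ((d + 1) * (2 * I) ^ (d + 1)) * Rnform k n p := by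
  obtain ⟨e, he, rfl⟩ : ∃ e, 0 < e ∧ d = n + e := ⟨d - n, by omega, by omega⟩
  have hint := AffineFamily.integrable_kernel (i := 0) (r := 0) hreg hreg (zero_add _)
  have hsign : (-1 : ℂ) ^ (-(e + 1 : ℤ)) = -(-1) ^ n := by
    have hpar : Even (n + e) := ⟨k - 1, by omega⟩
    rw [zpow_neg, ← inv_zpow, inv_neg_one, zpow_add_one₀ (by simp), zpow_natCast, mul_neg_one,
      neg_inj]
    exact neg_one_pow_congr (by grind)
  rw [← AffineFamily.pairing_zero_zero (p := p), AffineFamily.pairing, integral_axisMeasure hint]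
  simp only [AffineFamily.kernel, pow_zero, one_mul]
  rw [tsum_congr fun M => integral_weight_mul_inv_eval_pow hn he hp (hslit M), tsum_mul_left,
    tsum_jfac_zpow_mul_moeb_zpow hp, hsign, Rnform, show 2 * k - 3 = n + e - 1 by omega,
    show 2 * k - 2 = n + e by omega, show 2 * k - 1 - n = e + 1 by omega,
    show -2 * (k : ℤ) = -(n + e + 2) by omega,
    show -(n + e + 2 : ℤ) - -(e + 1) = -n - 1 by ring]
  have htwo : (2 * I) ^ (n + e + 1) = 4 * 2 ^ (n + e - 1) * I ^ (n + e + 1) := by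
    rw [mul_pow, show n + e + 1 = n + e - 1 + 2 by omega, pow_add 2]
    ring
  have hI : I ^ (n + 2 * e + 4) = -(I ^ (n + e + 1) * I ^ (e + 1)) := by
    rw [← pow_add, ← neg_one_mul, ← I_sq, ← pow_add]
    ring_nf
  rw [htwo, hI, Nat.cast_add]
  field_simp

lemma Rnform_conj (hn : n < 2 * k) :
    Rnform k n (starRingEnd ℂ τ) = (-1) ^ (n + 1) * starRingEnd ℂ (Rnform k n τ) := by
  obtain ⟨e, he⟩ : ∃ e, 2 * k = n + e + 1 := ⟨2 * k - 1 - n, by omega⟩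
  have hsign : (-1 : ℂ) ^ e = (-1) ^ (n + 1) := neg_one_pow_congr (by grind)
  simp only [Rnform, moeb_conj, jfac_conj, map_mul, map_div₀, map_pow, conj_tsum, map_zpow₀, conj_I,
    conj_ofReal, map_natCast, map_ofNat, show 2 * k - 1 - n = e by omega, neg_pow I, hsign]
  field_simp

lemma neg_mul_sub_conj_pow_mul_eq (d n : ℕ) (τ c : ℂ) :
    -(d + 1) * (τ - starRingEnd ℂ τ) ^ d *
        ((-1) ^ n / ((d + 1) * (2 * I) ^ (d + 1)) * ((-1) ^ (n + 1) * c)) =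
      τ.im ^ d / (2 * I) * c := by
  have hd : (d : ℂ) + 1 ≠ 0 := d.cast_add_one_ne_zero
  have hsign : (-1 : ℂ) ^ n * (-1) ^ (n + 1) = -1 := by
    rw [← pow_add]
    exact Odd.neg_one_pow (by grind)
  rw [sub_conj, div_mul_eq_mul_div, ← mul_assoc ((-1) ^ n), hsign]
  push_cast
  field_simp
  ring

lemma inv_two_pi_I_pow_mul_factorial_mul (hd : Even d) (c : ℂ) :
    (2 * π * I)⁻¹ ^ (d + 1) * (d + 1).factorial * (c / ((d + 1) * (2 * I) ^ (d + 1))) =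
      -c * (d.factorial / (4 * π) ^ (d + 1)) := by
  have hd1 : (d : ℂ) + 1 ≠ 0 := d.cast_add_one_ne_zero
  have hI : (2 * π * I) ^ (d + 1) * (2 * I) ^ (d + 1) = -(4 * π) ^ (d + 1) := by
    rw [← mul_pow, ← hd.add_one.neg_pow]
    congr 1
    linear_combination 4 * π * I_sq
  rw [Nat.factorial_succ, inv_pow, ← neg_neg ((4 * π : ℂ) ^ (d + 1)), ← hI]
  push_cast
  field_simp

lemma dtaubar_Hlhmf (hd : 2 * k = d + 2) (hn : 0 < n) (hnd : n < d) (hτ : 0 < τ.im)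
    (hE : τ ∉ E1) :
    dtaubar (Hlhmf k n) τ = τ.im ^ d / (2 * I) * starRingEnd ℂ (Rnform k n τ) := by
  obtain ⟨hreg, hreg'⟩ := mem_regularSet_axisFamily hn hnd hτ hE
  rw [AffineFamily.dtaubar_of_eventuallyEq_harmonicLift
      (Hlhmf_eventuallyEq_harmonicLift hd hn hnd hτ hE) hreg hreg',
    moment_axisFamily hd hn hnd (by simpa using hτ.ne') hreg'
      fun _ => I_mul_moeb_conj_mem_slitPlane hτ,
    Rnform_conj (by omega), neg_mul_sub_conj_pow_mul_eq]

lemma iterate_Dop_Hlhmf (hd : 2 * k = d + 2) (hn : 0 < n) (hnd : n < d) (hτ : 0 < τ.im)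
    (hE : τ ∉ E1) :
    Dop^[d + 1] (Hlhmf k n) τ =
      (-1) ^ (n + 1) * (d.factorial / (4 * π) ^ (d + 1)) * Rnform k n τ := by
  obtain ⟨hreg, hreg'⟩ := mem_regularSet_axisFamily hn hnd hτ hE
  rw [AffineFamily.iterate_Dop_of_eventuallyEq_harmonicLift
      (Hlhmf_eventuallyEq_harmonicLift hd hn hnd hτ hE) hreg hreg',
    moment_axisFamily hd hn hnd hτ.ne' hreg fun _ => I_mul_moeb_mem_slitPlane hτ hE,
    ← mul_assoc, inv_two_pi_I_pow_mul_factorial_mul (show Even d from ⟨k - 1, by omega⟩),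
    pow_succ (-1 : ℂ), mul_neg_one]

lemma xiOp_neg_of_dtaubar_eq {f : ℂ → ℂ} {c : ℂ} (hτ : τ.im ≠ 0)
    (hf : dtaubar f τ = τ.im ^ d / (2 * I) * starRingEnd ℂ c) : xiOp (-d) f τ = -c := by
  have him : (τ.im : ℂ) ≠ 0 := ofReal_ne_zero.mpr hτ
  rw [xiOp, hf, zpow_neg, zpow_natCast]
  simp only [map_mul, map_div₀, map_pow, conj_ofReal, conj_I, map_ofNat, conj_conj]
  field_simp

end Moments

/-- images of `H_{1-k,n}` under `ξ_{2-2k}` and `𝒟^{2k-1}`. -/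
theorem xi_D_of_Hlhmf (k n : ℕ) (hk : 2 ≤ k) (hn0 : 0 < n) (hn1 : n < 2 * k - 2)
    (τ : ℂ) (hτ : 0 < τ.im) (hτE : τ ∉ E1) :
    xiOp (2 - 2 * k) (Hlhmf k n) τ = - Rnform k n τ ∧
    (Dop^[2 * k - 1] (Hlhmf k n)) τ =
      (-1 : ℂ) ^ (n + 1) * ((Nat.factorial (2 * k - 2) : ℂ) / (4 * (π : ℂ)) ^ (2 * k - 1)) *
        Rnform k n τ := by
  obtain ⟨d, hd⟩ : ∃ d, 2 * k = d + 2 := ⟨2 * k - 2, by omega⟩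
  have hnd : n < d := by omega
  rw [show 2 - 2 * (k : ℤ) = -d by omega, show 2 * k - 2 = d by omega,
    show 2 * k - 1 = d + 1 by omega]
  exact ⟨xiOp_neg_of_dtaubar_eq hτ.ne' (dtaubar_Hlhmf hd hn0 hnd hτ hτE),
    iterate_Dop_Hlhmf hd hn0 hnd hτ hτE⟩

end LHMF
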